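/- Let m ≥ 2 and λ = (m−2)/2. If f ∈ S(ℝ^m) is a real-valued radial function, f(x) = f₀(|x|), then the Clifford–Fourier transform of f agrees with the Hankel transform of order λ of the radial profile: F_− f(y) = (2π)^{−m/2} ∫_{ℝ^m} K_−(x,y) f(x) dx = ∫₀^∞ f₀(r) (J_λ(r|y|)/(r|y|)^λ) r^{2λ+1} dr. In particular, F_− f coincides with the classical Fourier transform (2π)^{−m/2}∫_{ℝ^m} e^{−i⟨x,y⟩} f(x) dx on radial functions. -/

import Mathlib

open scoped BigOperators
open MeasureTheory

noncomputable section

namespace CliffordFourier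

/-- Concrete model of the complexified Clifford algebra `Cl_{0,m} ⊗ ℂ`:
an element is the family of its complex coefficients on the canonical basis
`e_S = e_{i₁} ⋯ e_{i_k}` (for `S = {i₁ < … < i_k} ⊆ {0,…,m-1}`). -/
def Cl (m : ℕ) : Type := Finset (Fin m) → ℂ

variable {m : ℕ}

instance : NormedAddCommGroup (Cl m) :=
  inferInstanceAs (NormedAddCommGroup (Finset (Fin m) → ℂ))
instance : NormedSpace ℝ (Cl m) :=
  inferInstanceAs (NormedSpace ℝ (Finset (Fin m) → ℂ))
instance : Module ℂ (Cl m) := inferInstanceAs (Module ℂ (Finset (Fin m) → ℂ))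
instance : CompleteSpace (Cl m) := inferInstanceAs (CompleteSpace (Finset (Fin m) → ℂ))

/-- The coefficient of `a` on the basis element `e_S`. -/
def coeff (a : Cl m) : Finset (Fin m) → ℂ := a

/-- Build an element of the Clifford algebra from its coefficients. -/
def ofCoeff (f : Finset (Fin m) → ℂ) : Cl m := f

/-- `1 = e_∅`. -/
instance : One (Cl m) := ⟨ofCoeff fun S => if S = (∅ : Finset (Fin m)) then 1 else 0⟩

/-- Clifford multiplication, determined by the relations `e_i e_j = - e_j e_i` (`i ≠ j`)
and `e_i² = -1`; on basis elements it is given by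
`e_T · e_U = (-1)^{#{(t,u) ∈ T×U : u < t}} · (-1)^{#(T∩U)} · e_{T Δ U}`. -/
instance : Mul (Cl m) :=
  ⟨fun a b => ofCoeff fun S => ∑ T : Finset (Fin m),
    ((-1 : ℂ) ^ ((((T ×ˢ (symmDiff T S)).filter fun p : Fin m × Fin m => p.2 < p.1).card)
        + (T ∩ (symmDiff T S)).card))
      * coeff a T * coeff b (symmDiff T S)⟩

/-- The generator `e_i`. -/
def e (m : ℕ) (i : Fin m) : Cl m := ofCoeff fun S => if S = {i} then 1 else 0

/-- The embedding of a vector `x ∈ ℝ^m` as `x = Σ_i x_i e_i` in the Clifford algebra. -/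
def vec (m : ℕ) (x : Fin m → ℝ) : Cl m := ∑ i : Fin m, (x i : ℂ) • e m i

/-- The Euclidean inner product `⟨x,y⟩ = Σ_i x_i y_i`. -/
def ip (x y : Fin m → ℝ) : ℝ := ∑ i, x i * y i

/-- The Euclidean norm `|x|`. -/
def nrm (x : Fin m → ℝ) : ℝ := Real.sqrt (ip x x)

/-- The wedge product `x∧y = Σ_{j<k} e_j e_k (x_j y_k - x_k y_j)`. -/
def wedge (m : ℕ) (x y : Fin m → ℝ) : Cl m :=
  ∑ j : Fin m, ∑ k : Fin m,
    if j < k then ((x j * y k - x k * y j : ℝ) : ℂ) • (e m j * e m k) else 0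

/-- Complex conjugation of the coefficients. -/
def cconj (a : Cl m) : Cl m := ofCoeff fun S => starRingEnd ℂ (coeff a S)

/-- The Gegenbauer polynomial `C_k^λ(w)`, defined through the standard three-term
recurrence, equivalent to the generating function `(1-2wt+t²)^{-λ} = Σ_k C_k^λ(w) t^k`. -/
def geg (lam : ℝ) : ℕ → ℝ → ℝ
  | 0, _ => 1
  | 1, w => 2 * lam * w
  | (k+2), w => (2 * ((k : ℝ) + 1 + lam) * w * geg lam (k+1) w
      - ((k : ℝ) + 2 * lam) * geg lam k w) / ((k : ℝ) + 2)

/-- The Bessel function of the first kind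
`J_a(z) = Σ_{j≥0} (-1)^j (z/2)^{2j+a} / (j! Γ(j+a+1))`. -/
def besselJ (a z : ℝ) : ℝ :=
  ∑' j : ℕ, ((-1 : ℝ)^j * (z/2) ^ (2*(j:ℝ) + a)) / (j.factorial * Real.Gamma ((j : ℝ) + a + 1))

/-- The entire function `J̃_a(t) = t^{-a} J_a(t) = Σ_{j≥0} (-1)^j (t/2)^{2j} / (j! Γ(j+a+1) 2^a)`
(for `t > 0` this is literally `t^{-a} J_a(t)`). -/
def besselJt (a t : ℝ) : ℝ :=
  ∑' j : ℕ, ((-1 : ℝ)^j * (t/2) ^ (2*j)) / (j.factorial * Real.Gamma ((j : ℝ) + a + 1) * (2:ℝ)^a)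

/-- The renormalized Gegenbauer polynomial `((k+λ)/λ) C_k^λ = C_k^{λ+1} - C_{k-2}^{λ+1}`
(the right-hand side also makes sense for `λ = 0`, i.e. `m = 2`). -/
def gegT (lam : ℝ) (k : ℕ) (w : ℝ) : ℝ :=
  geg (lam + 1) k w - (if 2 ≤ k then geg (lam + 1) (k - 2) w else 0)

/-- `A_λ(w,z) = 2^{λ-1} Γ(λ+1) Σ_{k≥0} (u + (-1)^k) z^{-λ} J_{k+λ}(z) C_k^λ(w)`, where `u = i^m`;
here written using `z^{-λ} J_{k+λ}(z) = z^k J̃_{k+λ}(z)`, which makes the formula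
well defined for all `z ≥ 0` (and all `m ≥ 2`). -/
def AfunR (u : ℂ) (lam w z : ℝ) : ℂ :=
  (((2:ℝ)^(lam - 1) * Real.Gamma (lam + 1) : ℝ) : ℂ) *
    ∑' k : ℕ, (u + (-1 : ℂ)^k) * ((z^k * besselJt ((k : ℝ) + lam) z * geg lam k w : ℝ) : ℂ)

/-- `B_λ(w,z) = -2^{λ-1} Γ(λ) Σ_{k≥0} (k+λ)(u - (-1)^k) z^{-λ} J_{k+λ}(z) C_k^λ(w)`;
here written using `Γ(λ)(k+λ)C_k^λ = Γ(λ+1)(C_k^{λ+1} - C_{k-2}^{λ+1})` and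
`z^{-λ} J_{k+λ}(z) = z^k J̃_{k+λ}(z)`, which makes the formula well defined
for all `z ≥ 0` and all `m ≥ 2` (including `λ = 0`). -/
def BfunR (u : ℂ) (lam w z : ℝ) : ℂ :=
  -(((2:ℝ)^(lam - 1) * Real.Gamma (lam + 1) : ℝ) : ℂ) *
    ∑' k : ℕ, (u - (-1 : ℂ)^k) * ((z^k * besselJt ((k : ℝ) + lam) z * gegT lam k w : ℝ) : ℂ)

/-- `C_λ(w,z) = -2^{λ-1} Γ(λ) Σ_{k≥0} (u + (-1)^k) z^{-λ-1} J_{k+λ}(z) (C_k^λ)'(w)`;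
here written using `Γ(λ) (C_k^λ)' = 2 Γ(λ+1) C_{k-1}^{λ+1}` and
`z^{-λ-1} J_{k+λ}(z) = z^{k-1} J̃_{k+λ}(z)`, which makes the formula well defined
for all `z ≥ 0` and all `m ≥ 2` (including `λ = 0`). -/
def CfunR (u : ℂ) (lam w z : ℝ) : ℂ :=
  -(((2:ℝ)^lam * Real.Gamma (lam + 1) : ℝ) : ℂ) *
    ∑' k : ℕ, (u + (-1 : ℂ)^k) *
      ((z^(k - 1) * besselJt ((k : ℝ) + lam) z
        * (if 1 ≤ k then geg (lam + 1) (k - 1) w else 0) : ℝ) : ℂ)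

/-- The Clifford-Fourier kernel
`K_-(x,y) = A_λ(w,z) + B_λ(w,z) + (x∧y) C_λ(w,z)`
with `λ = (m-2)/2`, `z = |x||y|`, `w = ⟨x,y⟩/(|x||y|)`. -/
def Kminus (m : ℕ) (x y : Fin m → ℝ) : Cl m :=
  (AfunR (Complex.I ^ m) (((m:ℝ) - 2)/2) (ip x y / (nrm x * nrm y)) (nrm x * nrm y)
    + BfunR (Complex.I ^ m) (((m:ℝ) - 2)/2) (ip x y / (nrm x * nrm y)) (nrm x * nrm y)) • (1 : Cl m)
  + CfunR (Complex.I ^ m) (((m:ℝ) - 2)/2) (ip x y / (nrm x * nrm y)) (nrm x * nrm y) • wedge m x y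

open Polynomial in
/-- polynomial version of geg -/
def gP (lam : ℝ) : ℕ → ℝ[X]
  | 0 => 1
  | 1 => C (2 * lam) * X
  | (k+2) => C (2 * ((k : ℝ) + 1 + lam) / ((k:ℝ)+2)) * (X * gP lam (k+1))
      - C (((k : ℝ) + 2 * lam) / ((k:ℝ)+2)) * gP lam k

open Polynomial in
lemma gP_eval (lam w : ℝ) : ∀ k, (gP lam k).eval w = geg lam k w
  | 0 => by simp [gP, geg]
  | 1 => by simp [gP, geg]
  | (k+2) => by
    have h1 := gP_eval lam w (k+1)
    have h2 := gP_eval lam w k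
    simp only [gP, geg, eval_sub, eval_mul, eval_C, eval_X, h1, h2]
    have : (k:ℝ)+2 ≠ 0 := by positivity
    field_simp

open Polynomial in
lemma gP_rec (lam : ℝ) (k : ℕ) : C ((k:ℝ)+2) * gP lam (k+2) =
    C (2 * ((k : ℝ) + 1 + lam)) * (X * gP lam (k+1)) - C ((k : ℝ) + 2 * lam) * gP lam k := by
  have : (k:ℝ)+2 ≠ 0 := by positivity
  simp only [gP, mul_sub, ← mul_assoc, ← C_mul]
  congr 3 <;> field_simp

open Polynomial in
lemma gP_deriv (lam : ℝ) : ∀ k : ℕ, (1 - X^2) * derivative (gP lam k) =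
    C ((k:ℝ) + 2 * lam) * (X * gP lam k) - C ((k:ℝ)+1) * gP lam (k+1)
  | 0 => by simp [gP]
  | 1 => by
    have h := gP_rec lam 0
    have h2 : C (((1:ℕ):ℝ)+1) * gP lam (1+1) = C (((0:ℕ):ℝ)+2) * gP lam (0+2) := by norm_num
    rw [h2, h]
    simp only [gP, derivative_mul, derivative_C, derivative_X, map_add, map_mul, C_1, Nat.cast_one,
      map_ofNat, Nat.cast_zero, C_0, derivative_ofNat]
    ring
  | (k+2) => by
    have i1 := gP_deriv lam (k+1)
    have i2 := gP_deriv lam k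
    have r1 := gP_rec lam k
    have r2 := gP_rec lam (k+1)
    have hd := congrArg derivative r1
    have hne : C ((k:ℝ)+2) ≠ 0 := by
      rw [Ne, C_eq_zero]; positivity
    apply mul_left_cancel₀ hne
    simp only [derivative_mul, derivative_C, derivative_X, derivative_sub] at hd
    push_cast at i1 i2 r1 r2 hd ⊢
    simp only [map_add, map_mul, C_1, map_ofNat, map_natCast] at *
    have e : k + 1 + 2 = k + 2 + 1 := rfl
    have e' : k + 1 + 1 = k + 2 := rfl
    rw [e, e'] at r2
    rw [e'] at i1
    linear_combination (1 - X^2) * hd + (2 * ((k:ℝ[X]) + 1 + C lam)) * X * i1 - ((k:ℝ[X]) + 2 * C lam) * i2 + ((k:ℝ[X]) + 2) * r2 - ((k:ℝ[X]) + 2 * C lam) * X * r1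

section abs
open Polynomial
variable (L : ℝ[X] →ₗ[ℝ] ℝ) (lam : ℝ) (hlam : 0 ≤ lam)
  (hL1 : L X = 0) (hL : ∀ n : ℕ, ((n:ℝ) + 2 * lam + 2) * L (X^(n+2)) = ((n:ℝ)+1) * L (X^n))

lemma L_C_mul (a : ℝ) (p : ℝ[X]) : L (C a * p) = a * L p := by
  rw [← smul_eq_C_mul, map_smul, smul_eq_mul]

include hL1 hL in
lemma L_div (p : ℝ[X]) : L ((1 - X^2) * derivative p) = (2 * lam + 1) * L (X * p) := by
  induction p using Polynomial.induction_on' with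
  | add p q hp hq => simp only [derivative_add, mul_add, map_add, hp, hq]
  | monomial n a =>
    rw [← C_mul_X_pow_eq_monomial]
    rcases n with _ | n
    · simp only [pow_zero, mul_one, derivative_C, mul_zero, map_zero]
      rw [X_mul_C, L_C_mul, hL1]; ring
    · have h := hL n
      have e1 : (1 - X^2) * derivative (C a * X^(n+1)) = C (a * (n+1)) * (X^n) - C (a * (n+1)) * (X^(n+2)) := by
        rw [derivative_C_mul_X_pow]
        push_cast
        simp only [map_mul, map_add, C_1, map_natCast]
        ring
      have e2 : X * (C a * X^(n+1)) = C a * X^(n+2) := by ring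
      rw [e1, e2, map_sub, L_C_mul, L_C_mul, L_C_mul]
      linear_combination (-a) * h

include hL1 hL in
/-- `k ≥ 1`: Gegenbauer polynomials of order `lam+1` have stable means. -/
lemma L_succ (n : ℕ) : L (gP (lam+1) (n+1)) = L (X * gP (lam+1) n) := by
  have h := L_div L lam hL1 hL (gP (lam+1) n)
  rw [gP_deriv, map_sub, L_C_mul, L_C_mul] at h
  have : (n:ℝ)+1 ≠ 0 := by positivity
  apply mul_left_cancel₀ this
  linear_combination -h

include hL1 hL hlam in
lemma L_two (n : ℕ) : L (gP (lam+1) (n+2)) = L (gP (lam+1) n) := by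
  have h := congrArg L (gP_rec (lam+1) n)
  rw [map_sub, L_C_mul, L_C_mul, L_C_mul, ← L_succ L lam hL1 hL] at h
  have : (n:ℝ)+2 * (lam+1) ≠ 0 := by positivity
  apply mul_left_cancel₀ this
  linear_combination -h

/-- `(2λ)_k / k!` -/
def cc (lam : ℝ) : ℕ → ℝ
  | 0 => 1
  | (k+1) => cc lam k * ((k:ℝ) + 2 * lam) / ((k:ℝ) + 1)

include hL1 hL in
lemma L_moment_rec0 (k : ℕ) : ((k:ℝ)+1) * L (gP lam (k+1)) = ((k:ℝ) - 1) * L (X * gP lam k) := by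
  have h := L_div L lam hL1 hL (gP lam k)
  rw [gP_deriv, map_sub, L_C_mul, L_C_mul] at h
  linear_combination -h

include hL1 hL in
lemma L_moment_rec (n k : ℕ) : ((k:ℝ)+1) * L (X^(n+1) * gP lam (k+1)) =
    ((n:ℝ)+1) * L (X^n * gP lam k) + ((k:ℝ) - n - 2) * L (X^(n+2) * gP lam k) := by
  have h := L_div L lam hL1 hL (X^(n+1) * gP lam k)
  have e : (1 - X^2) * derivative (X^(n+1) * gP lam k) =
      C ((n:ℝ)+1) * (X^n * gP lam k) - C ((n:ℝ)+1) * (X^(n+2) * gP lam k)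
       + C ((k:ℝ) + 2 * lam) * (X^(n+2) * gP lam k) - C ((k:ℝ)+1) * (X^(n+1) * gP lam (k+1)) := by
    have := gP_deriv lam k
    rw [derivative_mul, derivative_X_pow]
    push_cast
    simp only [Nat.add_sub_cancel, map_add, C_1, map_natCast] at *
    linear_combination (X^(n+1)) * this
  have e2 : X * (X^(n+1) * gP lam k) = X^(n+2) * gP lam k := by ring
  rw [e, e2, map_sub, map_add, map_sub, L_C_mul, L_C_mul, L_C_mul, L_C_mul] at h
  linear_combination -h

include hL1 hL hlam in
lemma L_odd (j : ℕ) : L (X^(2*j+1)) = 0 := by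
  induction j with
  | zero => simpa using hL1
  | succ j ih =>
    have h := hL (2*j+1)
    rw [ih] at h
    have : ((2*j+1 : ℕ):ℝ) + 2 * lam + 2 ≠ 0 := by positivity
    have e : 2*(j+1)+1 = 2*j+1+2 := by ring
    rw [e]
    exact mul_left_cancel₀ this (by linarith)

include hL hlam in
lemma L_even (j : ℕ) : L (X^(2*j)) = L 1 * Real.Gamma (lam+1) * ((2*j).factorial /
    (j.factorial * 2^(2*j) * Real.Gamma (j + lam + 1))) := by
  induction j with
  | zero =>
    have : Real.Gamma (lam+1) ≠ 0 := (Real.Gamma_pos_of_pos (by positivity)).ne'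
    simp [this]
  | succ j ih =>
    have h := hL (2*j)
    rw [ih] at h
    have : ((2*j : ℕ):ℝ) + 2 * lam + 2 ≠ 0 := by positivity
    have e : 2*(j+1) = 2*j+2 := by ring
    rw [e]
    apply mul_left_cancel₀ this
    rw [h]
    have g1 : Real.Gamma (((j+1:ℕ):ℝ) + lam + 1) = (j + lam + 1) * Real.Gamma (j+lam+1) := by
      rw [← Real.Gamma_add_one (by positivity)]; congr 1; push_cast; ring
    have : Real.Gamma (j + lam+1) ≠ 0 := (Real.Gamma_pos_of_pos (by positivity)).ne'
    have h3 : (j:ℝ)+lam+1 ≠ 0 := by positivity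
    rw [g1, Nat.factorial_succ (2*j+1), Nat.factorial_succ (2*j), Nat.factorial_succ j]
    push_cast
    have h4 : (j.factorial:ℝ) ≠ 0 := by positivity
    field_simp
    ring

include hL1 hL hlam in
lemma L_moment (k : ℕ) : (∀ j : ℕ, L (X^(k+2*j) * gP lam k) =
    L 1 * Real.Gamma (lam+1) * cc lam k * ((k+2*j).factorial /
    (j.factorial * 2^(k+2*j) * Real.Gamma ((k:ℝ) + j + lam + 1)))) ∧
    ∀ n : ℕ, (∀ j, n ≠ k + 2*j) → L (X^n * gP lam k) = 0 := by
  induction k with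
  | zero =>
    constructor
    · intro j
      simp only [zero_add, gP, mul_one, cc, Nat.cast_zero]
      exact L_even L lam hlam hL j
    · intro n hn
      rcases Nat.even_or_odd' n with ⟨j, rfl | rfl⟩
      · exact absurd (by simp) (hn j)
      · simp only [gP, mul_one]; exact L_odd L lam hlam hL1 hL j
  | succ k ih =>
    obtain ⟨ih1, ih2⟩ := ih
    have hk : (k:ℝ)+1 ≠ 0 := by positivity
    constructor
    · intro j
      have h := L_moment_rec L lam hL1 hL (k+2*j) k
      have e : k + 1 + 2*j = k+2*j+1 := by ring
      have e2 : k + 2*j + 2 = k+2*(j+1) := by ring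
      rw [ih1 j, e2, ih1 (j+1)] at h
      rw [e]
      apply mul_left_cancel₀ hk
      rw [h]
      have g1 : Real.Gamma ((k:ℝ)+((j+1:ℕ):ℝ) + lam + 1) = (k + j + lam + 1) * Real.Gamma (k + j+lam+1) := by
        rw [← Real.Gamma_add_one (by positivity)]; congr 1; push_cast; ring
      have g2 : Real.Gamma (((k+1:ℕ):ℝ)+j + lam + 1) = (k + j + lam + 1) * Real.Gamma (k + j+lam+1) := by
        rw [← Real.Gamma_add_one (by positivity)]; congr 1; push_cast; ring
      have : Real.Gamma (k + j + lam+1) ≠ 0 := (Real.Gamma_pos_of_pos (by positivity)).ne'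
      have h3 : (k:ℝ)+j+lam+1 ≠ 0 := by positivity
      rw [g1, g2, ← e2, Nat.factorial_succ (k+2*j+1), Nat.factorial_succ (k+2*j), Nat.factorial_succ j]
      push_cast
      have h4 : (j.factorial:ℝ) ≠ 0 := by positivity
      simp only [cc]
      field_simp
      ring
    · intro n hn
      apply mul_left_cancel₀ hk
      rcases n with _ | n
      · rw [pow_zero, one_mul, L_moment_rec0 L lam hL1 hL]
        by_cases h : ∃ j, 1 = k + 2*j
        · obtain ⟨j, hj⟩ := h
          have : k = 1 := by omega
          subst this; simp
        · push Not at h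
          have := ih2 1 h
          rw [pow_one] at this
          rw [this]; ring
      · rw [L_moment_rec L lam hL1 hL, ih2 n (fun j hj => hn j (by omega))]
        by_cases h : ∃ j, n + 2 = k + 2*j
        · obtain ⟨j, hj⟩ := h
          have : j = 0 := by
            rcases j with _ | j
            · rfl
            · exact absurd (by omega) (hn j)
          subst this
          have : k = n+2 := by omega
          subst this; push_cast; ring
        · push Not at h
          rw [ih2 _ h]; ring
end abs

lemma cc_ge (lam : ℝ) (hlam : 1/2 ≤ lam) (k : ℕ) : 1 ≤ cc lam k := by
  induction k with
  | zero => simp [cc]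
  | succ k ih =>
    simp only [cc]
    rw [le_div_iff₀ (by positivity)]
    nlinarith

/-- `(μ)_k / k!` -/
def bb (mu : ℝ) : ℕ → ℝ
  | 0 => 1
  | (k+1) => bb mu k * ((k:ℝ) + mu) / ((k:ℝ) + 1)

lemma bb_nonneg (mu : ℝ) (h : 0 ≤ mu) (k : ℕ) : 0 ≤ bb mu k := by
  induction k with
  | zero => simp [bb]
  | succ k ih => simp only [bb]; positivity

lemma bb_le (mu : ℝ) (h : 0 ≤ mu) (N : ℕ) (hN : mu ≤ N) (k : ℕ) : bb mu k ≤ ((k:ℝ)+1)^N := by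
  induction k with
  | zero => simp [bb]
  | succ k ih =>
    simp only [bb]
    have hk : (0:ℝ) < (k:ℝ)+1 := by positivity
    have h1 := one_add_mul_le_pow (a := 1/((k:ℝ)+1)) (by
      have : 0 ≤ 1/((k:ℝ)+1) := by positivity
      linarith) N
    have h2 : ((k:ℝ)+1) * (1 + 1/((k:ℝ)+1)) = ((k+1:ℕ):ℝ)+1 := by
      push_cast; field_simp
    rw [← h2, mul_pow]
    calc bb mu k * ((k:ℝ) + mu) / ((k:ℝ) + 1) = bb mu k * (((k:ℝ) + mu) / ((k:ℝ) + 1)) := by ring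
      _ ≤ ((k:ℝ)+1)^N * (1 + N * (1/((k:ℝ)+1))) := by
        apply mul_le_mul ih _ (by positivity) (by positivity)
        rw [div_le_iff₀ hk]
        have : (1 + N * (1/((k:ℝ)+1))) * ((k:ℝ)+1) = k + 1 + N := by field_simp
        rw [this]; linarith
      _ ≤ _ := by gcongr

open PowerSeries in
/-- The series `(1-at)^{-μ}` -/
def FS (mu : ℝ) (a : ℂ) : PowerSeries ℂ := PowerSeries.mk fun j => (bb mu j : ℂ) * a^j

open PowerSeries in
lemma FS_ode (mu : ℝ) (a : ℂ) :
    (1 - C a * X) * (d⁄dX ℂ (FS mu a)) = C ((mu:ℂ) * a) * FS mu a := by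
  ext n
  rw [sub_mul, one_mul, map_sub, mul_assoc, coeff_C_mul, coeff_C_mul]
  rcases n with _ | n
  · simp [coeff_derivative, FS, bb, coeff_zero_X_mul]
  · rw [coeff_succ_X_mul, coeff_derivative, coeff_derivative]
    simp only [FS, coeff_mk]
    have h : (bb mu (n+1+1) : ℂ) * ((n:ℂ)+1+1) = bb mu (n+1) * ((n:ℂ)+1+mu) := by
      have : bb mu (n+1+1) * ((n:ℝ)+1+1) = bb mu (n+1) * ((n:ℝ)+1+mu) := by
        rw [bb]; push_cast
        field_simp
      exact_mod_cast this
    push_cast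
    linear_combination (a^(n+1+1)) * h

open PowerSeries in
lemma geg_eq_coeff (mu w : ℝ) (a b : ℂ) (hab : a * b = 1) (hs : a + b = 2 * w) :
    ∀ k, (geg mu k w : ℂ) = PowerSeries.coeff k (FS mu a * FS mu b) := by
  set F := FS mu a * FS mu b with hF
  have ode : (1 - C (2 * (w:ℂ)) * X + X * X) * (d⁄dX ℂ F) = (C (2 * mu * w : ℂ) - C (2 * mu : ℂ) * X) * F := by
    have ha := FS_ode mu a
    have hb := FS_ode mu b
    have e1 : (C a * C b : PowerSeries ℂ) = 1 := by rw [← map_mul, hab, map_one]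
    have e2 : C (2 * (w:ℂ)) = (C a + C b : PowerSeries ℂ) := by rw [← hs, map_add]
    have e3 : C (2 * mu * w : ℂ) = C (mu:ℂ) * (C a + C b : PowerSeries ℂ) := by
      rw [← map_add, ← map_mul, hs]; congr 1; ring
    have e4 : C (2 * mu : ℂ) = C (mu:ℂ) * (2 : PowerSeries ℂ) := by
      rw [mul_comm, map_mul, map_ofNat]
    rw [e2, e3, e4, hF, Derivation.leibniz]
    simp only [smul_eq_mul]
    rw [map_mul] at ha hb
    linear_combination (1 - C b * X) * FS mu b * ha + (1 - C a * X) * FS mu a * hb + (-X * X * FS mu a * (d⁄dX ℂ (FS mu b)) - X * X * FS mu b * (d⁄dX ℂ (FS mu a)) - 2 * C (mu:ℂ) * X * FS mu a * FS mu b) * e1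
  have h0 : PowerSeries.coeff 0 F = 1 := by simp [hF, FS, bb]
  have h1 : PowerSeries.coeff 1 F = 2 * mu * w := by
    have := congrArg (PowerSeries.coeff 0) ode
    simp only [add_mul, sub_mul, map_add, map_sub, mul_assoc, one_mul, coeff_C_mul, coeff_zero_X_mul, coeff_derivative, h0] at this
    simp only [Nat.cast_zero, zero_add] at this
    linear_combination this
  have h2 : ∀ n : ℕ, ((n:ℂ)+2) * PowerSeries.coeff (n+2) F = 2 * ((n:ℂ)+1+mu) * w * PowerSeries.coeff (n+1) F - ((n:ℂ)+2*mu) * PowerSeries.coeff n F := by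
    intro n
    have := congrArg (PowerSeries.coeff (n+1)) ode
    simp only [add_mul, sub_mul, map_add, map_sub, mul_assoc, one_mul, coeff_C_mul, coeff_succ_X_mul, coeff_derivative] at this
    have h3 : PowerSeries.coeff n (X * (d⁄dX ℂ F)) = n * PowerSeries.coeff n F := by
      rcases n with _ | n
      · simp
      · rw [coeff_succ_X_mul, coeff_derivative]; push_cast; ring
    rw [h3] at this
    push_cast at this
    linear_combination this
  intro k
  induction k using Nat.twoStepInduction with
  | zero => simp [geg, h0]
  | one => simp [geg, h1]
  | more n ih1 ih2 =>
    have hne : (n:ℂ)+2 ≠ 0 := by exact_mod_cast (by positivity : (n:ℝ)+2 ≠ 0)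
    apply mul_left_cancel₀ hne
    rw [h2, ← ih1, ← ih2]
    rw [geg]
    push_cast
    field_simp

lemma geg_bound (mu : ℝ) (h : 0 ≤ mu) : ∃ N : ℕ, ∀ k w, |w| ≤ 1 → |geg mu k w| ≤ ((k:ℝ)+1)^N := by
  obtain ⟨N, hN⟩ := exists_nat_ge mu
  refine ⟨N + N + 1, fun k w hw => ?_⟩
  set θ := Real.arccos w
  have hθ : Real.cos θ = w := Real.cos_arccos (abs_le.1 hw).1 (abs_le.1 hw).2
  set a := Complex.exp (θ * Complex.I)
  set b := Complex.exp (-θ * Complex.I)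
  have hab : a * b = 1 := by
    simp only [a, b, ← Complex.exp_add]; simp
  have hs : a + b = 2 * w := by
    rw [← hθ, Complex.ofReal_cos, Complex.cos]; simp only [a, b]; ring
  have na : ‖a‖ = 1 := Complex.norm_exp_ofReal_mul_I θ
  have nb : ‖b‖ = 1 := by
    have := Complex.norm_exp_ofReal_mul_I (-θ)
    simpa [b] using this
  rw [← Real.norm_eq_abs, ← Complex.norm_real, geg_eq_coeff mu w a b hab hs k, PowerSeries.coeff_mul]
  calc _ ≤ ∑ p ∈ Finset.HasAntidiagonal.antidiagonal k, ((k:ℝ)+1)^(N+N) := by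
        refine norm_sum_le_of_le _ fun p hp => ?_
        have := Finset.HasAntidiagonal.mem_antidiagonal.1 hp
        have h1 : (p.1:ℝ) ≤ k := by exact_mod_cast (by omega)
        have h2 : (p.2:ℝ) ≤ k := by exact_mod_cast (by omega)
        simp only [FS, PowerSeries.coeff_mk, norm_mul, norm_pow, na, nb, one_pow, mul_one, Complex.norm_real,
          Real.norm_eq_abs, abs_of_nonneg (bb_nonneg mu h _)]
        rw [pow_add]
        apply mul_le_mul _ _ (bb_nonneg mu h _) (by positivity)
        · exact (bb_le mu h N hN _).trans (by gcongr)
        · exact (bb_le mu h N hN _).trans (by gcongr)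
    _ = _ := by
      simp; ring

abbrev EE (m : ℕ) := EuclideanSpace ℝ (Fin m)
abbrev SS (m : ℕ) := Metric.sphere (0 : EE m) 1
abbrev sig (m : ℕ) : Measure (SS m) := (volume : Measure (EE m)).toSphere

lemma EE_nontrivial {m : ℕ} (hm : 2 ≤ m) : Nontrivial (EE m) := by
  have : Nonempty (Fin m) := ⟨⟨0, by omega⟩⟩
  infer_instance

lemma polar {F : Type*} [NormedAddCommGroup F] [NormedSpace ℝ F] {m : ℕ} (hm : 2 ≤ m) (G : EE m → F)
    (hG : Integrable G) :
    ∫ x, G x = ∫ r in Set.Ioi (0:ℝ), r^(m-1) • ∫ ω : SS m, G (r • (ω : EE m)) ∂(sig m) := by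
  have := EE_nontrivial hm
  have hmp := (volume : Measure (EE m)).measurePreserving_homeomorphUnitSphereProd
  have hd : Module.finrank ℝ (EE m) = m := by simp
  rw [hd] at hmp
  set g : SS m × Set.Ioi (0:ℝ) → F := fun p => G ((p.2:ℝ) • (p.1 : EE m)) with hg
  have hcomp : ∀ x : ({(0 : EE m)}ᶜ : Set (EE m)), g (homeomorphUnitSphereProd (EE m) x) = G x := by
    intro x
    have hx : ‖(x : EE m)‖ ≠ 0 := norm_ne_zero_iff.2 x.2
    simp [hg, smul_smul, hx]
  have hint : Integrable g ((sig m).prod (Measure.volumeIoiPow (m-1))) := by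
    rw [← hmp.integrable_comp_emb (Homeomorph.measurableEmbedding _)]
    have : (g ∘ homeomorphUnitSphereProd (EE m)) = G ∘ Subtype.val := by
      funext x; exact hcomp x
    rw [this, ← integrableOn_iff_comap_subtypeVal (measurableSet_singleton _).compl]
    exact hG.integrableOn
  calc
    ∫ x, G x = ∫ x : ({(0)}ᶜ : Set (EE m)), G x.1 ∂((volume : Measure (EE m)).comap (↑)) := by
      rw [integral_subtype_comap (measurableSet_singleton _).compl G,
        restrict_compl_singleton]
    _ = ∫ x, g x ∂(sig m).prod (.volumeIoiPow (m - 1)) := by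
      rw [← hmp.integral_comp (Homeomorph.measurableEmbedding _) g]
      exact integral_congr_ae (.of_forall fun x => (hcomp x).symm)
    _ = ∫ r : Set.Ioi (0:ℝ), (∫ ω : SS m, G ((r:ℝ) • (ω : EE m)) ∂(sig m)) ∂(.volumeIoiPow (m - 1)) := by
      rw [integral_prod_symm g hint]
    _ = _ := by
      simp only [Measure.volumeIoiPow, ENNReal.ofReal]
      rw [integral_withDensity_eq_integral_smul,
        integral_subtype_comap measurableSet_Ioi fun a ↦ Real.toNNReal (a ^ (m - 1)) • (∫ ω : SS m, G ((a:ℝ) • (ω : EE m)) ∂(sig m)),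
        setIntegral_congr_fun measurableSet_Ioi fun x hx ↦ ?_]
      · rw [NNReal.smul_def, Real.coe_toNNReal _ (pow_nonneg hx.out.le _)]
      · exact (measurable_subtype_coe.pow_const _).real_toNNReal

lemma sig_real {m : ℕ} (hm : 2 ≤ m) :
    (sig m).real Set.univ = 2 * Real.pi^((m:ℝ)/2) / Real.Gamma ((m:ℝ)/2) := by
  have : Nonempty (Fin m) := ⟨⟨0, by omega⟩⟩
  rw [Measure.toSphere_real_apply_univ, Measure.real, EuclideanSpace.volume_ball]
  have hm' : (0:ℝ) < m := by exact_mod_cast (by omega)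
  have h1 : 0 ≤ √Real.pi ^ m / Real.Gamma ((m:ℝ)/2 + 1) :=
    div_nonneg (by positivity) (Real.Gamma_pos_of_pos (by positivity)).le
  simp only [finrank_euclideanSpace, Fintype.card_fin, ENNReal.ofReal_one, one_pow, one_mul,
    ENNReal.toReal_ofReal h1]
  rw [Real.Gamma_add_one (by positivity), Real.sqrt_eq_rpow, ← Real.rpow_natCast, ← Real.rpow_mul Real.pi_pos.le]
  have : Real.Gamma ((m:ℝ)/2) ≠ 0 := (Real.Gamma_pos_of_pos (by positivity)).ne'
  have e : (1/2 * (m:ℝ)) = m/2 := by ring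
  rw [e]
  field_simp

lemma gauss_int {m : ℕ} (hm : 2 ≤ m) (n : ℕ) : Integrable (fun x : EE m => ‖x‖^n * Real.exp (-‖x‖^2)) := by
  have := EE_nontrivial hm
  rw [integrable_fun_norm_addHaar (volume : Measure (EE m)) (f := fun r => r^n * Real.exp (-r^2))]
  have := integrable_rpow_mul_exp_neg_mul_sq (b := 1) one_pos (s := ((m-1+n:ℕ):ℝ)) (by
    have : (0:ℝ) ≤ ((m-1+n:ℕ):ℝ) := by positivity
    linarith)
  have := this.integrableOn (s := Set.Ioi 0)
  refine this.congr_fun (fun x hx => ?_) measurableSet_Ioi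
  simp only [finrank_euclideanSpace, Fintype.card_fin, Real.rpow_natCast, smul_eq_mul]
  rw [pow_add]; ring_nf

lemma gauss_inner_int {m : ℕ} (hm : 2 ≤ m) (η : EE m) (hη : ‖η‖ = 1) (n : ℕ) :
    Integrable (fun x : EE m => (inner ℝ η x)^n * Real.exp (-‖x‖^2)) := by
  refine (gauss_int hm n).mono' (by fun_prop) (.of_forall fun x => ?_)
  rw [norm_mul, Real.norm_eq_abs, Real.norm_eq_abs, abs_pow, abs_of_pos (Real.exp_pos _)]
  have := abs_real_inner_le_norm η x
  rw [hη, one_mul] at this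
  gcongr

/-- mean of a polynomial in the direction `η` -/
def LL {m : ℕ} (η : EE m) : Polynomial ℝ →ₗ[ℝ] ℝ where
  toFun P := ∫ ω : SS m, P.eval (inner ℝ η (ω : EE m)) ∂(sig m)
  map_add' P Q := by
    simp only [Polynomial.eval_add]
    refine integral_add ?_ ?_ <;>
    · refine Continuous.integrable_of_hasCompactSupport ?_ (HasCompactSupport.of_compactSpace _)
      exact (Polynomial.continuous _).comp (by fun_prop)
  map_smul' a P := by
    simp only [Polynomial.eval_smul, RingHom.id_apply]
    exact integral_smul a _

lemma gauss_ibp {m : ℕ} (hm : 2 ≤ m) (η : EE m) (hη : ‖η‖ = 1) (n : ℕ) :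
    2 * ∫ x : EE m, (inner ℝ η x)^(n+1) * Real.exp (-‖x‖^2) =
      n * ∫ x : EE m, (inner ℝ η x)^(n-1) * Real.exp (-‖x‖^2) := by
  have key := integral_bilinear_hasLineDerivAt_right_eq_neg_left_of_integrable (μ := (volume : Measure (EE m)))
    (f := fun x => (inner ℝ η x)^n) (f' := fun x => (n:ℝ) * (inner ℝ η x)^(n-1))
    (g := fun x => Real.exp (-‖x‖^2)) (g' := fun x => -2 * (inner ℝ η x) * Real.exp (-‖x‖^2)) (v := η)
    (B := ContinuousLinearMap.mul ℝ ℝ) ?_ ?_ ?_ ?_ ?_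
  · simp only [ContinuousLinearMap.mul_apply'] at key
    have e1 : ∀ x : EE m, (inner ℝ η x)^n * (-2 * (inner ℝ η x) * Real.exp (-‖x‖^2)) = (-2) * ((inner ℝ η x)^(n+1) * Real.exp (-‖x‖^2)) := by
      intro x; ring
    have e2 : ∀ x : EE m, (n:ℝ) * (inner ℝ η x)^(n-1) * Real.exp (-‖x‖^2) = (n:ℝ) * ((inner ℝ η x)^(n-1) * Real.exp (-‖x‖^2)) := by
      intro x; ring
    simp_rw [e1, e2] at key
    rw [integral_const_mul, integral_const_mul] at key
    linarith
  · simp only [ContinuousLinearMap.mul_apply', mul_assoc]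
    exact (gauss_inner_int hm η hη (n-1)).const_mul _
  · simp only [ContinuousLinearMap.mul_apply']
    refine ((gauss_inner_int hm η hη (n+1)).const_mul (-2)).congr (.of_forall fun x => ?_)
    simp only; ring
  · exact gauss_inner_int hm η hη n
  · intro x _
    have h : HasDerivAt (fun t : ℝ => (inner ℝ η (x + t • η) : ℝ)) 1 0 := by
      have e : (fun t : ℝ => (inner ℝ η (x + t • η) : ℝ)) = fun t => inner ℝ η x + t := by
        funext t
        rw [inner_add_right, inner_smul_right, real_inner_self_eq_norm_sq, hη]; ring
      rw [e]; exact (hasDerivAt_id (0:ℝ)).const_add _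
    have h2 := h.fun_pow n
    simpa [HasLineDerivAt] using h2
  · intro x _
    have h : HasDerivAt (fun t : ℝ => -‖x + t • η‖^2) (-2 * inner ℝ η x) 0 := by
      have e : (fun t : ℝ => -‖x + t • η‖^2) = fun t => -(‖x‖^2 + 2 * inner ℝ η x * t + t^2) := by
        funext t
        rw [norm_add_sq_real, inner_smul_right, real_inner_comm, norm_smul, hη]
        simp; ring
      rw [e]
      have := (((hasDerivAt_id (0:ℝ)).const_mul (2 * inner ℝ η x)).const_add (‖x‖^2)).add ((hasDerivAt_id (0:ℝ)).fun_pow 2)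
      have := this.neg
      convert! this using 1
      simp
    have h2 := h.exp
    unfold HasLineDerivAt
    convert! h2 using 1
    simp; ring

lemma gauss_polar {m : ℕ} (hm : 2 ≤ m) (η : EE m) (hη : ‖η‖ = 1) (n : ℕ) :
    ∫ x : EE m, (inner ℝ η x)^n * Real.exp (-‖x‖^2) =
      1/2 * Real.Gamma (((n:ℝ) + m)/2) * LL η (Polynomial.X^n) := by
  rw [polar hm _ (gauss_inner_int hm η hη n)]
  have h := integral_rpow_mul_exp_neg_rpow (p := 2) (q := ((m-1+n:ℕ):ℝ)) (by norm_num) (by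
    have : (0:ℝ) ≤ ((m-1+n:ℕ):ℝ) := by positivity
    linarith)
  have e : (((m-1+n:ℕ):ℝ)+1)/2 = ((n:ℝ)+m)/2 := by
    have : 1 ≤ m := by omega
    push_cast [this]; ring
  rw [e] at h
  rw [← h, ← integral_mul_const]
  refine setIntegral_congr_fun measurableSet_Ioi fun r hr => ?_
  have hr' : 0 < r := hr
  have e3 : ∀ ω : SS m, (inner ℝ η (r • (ω : EE m)))^n * Real.exp (-‖r • (ω : EE m)‖^2)
      = (r^n * Real.exp (-r^2)) * (inner ℝ η (ω : EE m))^n := by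
    intro ω
    have : ‖(ω : EE m)‖ = 1 := by simp
    rw [inner_smul_right, norm_smul, this, Real.norm_eq_abs, abs_of_pos hr', mul_pow]; ring_nf
  simp only [e3, integral_const_mul, LL, LinearMap.coe_mk, AddHom.coe_mk, Polynomial.eval_pow, Polynomial.eval_X, smul_eq_mul,
    Real.rpow_natCast]
  rw [pow_add, show (r:ℝ)^(2:ℝ) = r^2 by norm_cast]; ring

lemma LL_X {m : ℕ} (hm : 2 ≤ m) (η : EE m) (hη : ‖η‖ = 1) : LL η Polynomial.X = 0 := by
  have h := gauss_ibp hm η hη 0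
  rw [gauss_polar hm η hη] at h
  have : Real.Gamma ((((0+1:ℕ):ℝ) + m)/2) ≠ 0 := (Real.Gamma_pos_of_pos (by positivity)).ne'
  simp only [Nat.cast_zero, zero_mul, zero_add, pow_one] at h this
  rcases (by simpa using h) with h | h
  · exact absurd h (by simpa using this)
  · exact h

lemma LL_rec {m : ℕ} (hm : 2 ≤ m) (η : EE m) (hη : ‖η‖ = 1) (n : ℕ) :
    ((n:ℝ) + 2 * (((m:ℝ)-2)/2) + 2) * LL η (Polynomial.X^(n+2)) = ((n:ℝ)+1) * LL η (Polynomial.X^n) := by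
  have h := gauss_ibp hm η hη (n+1)
  rw [gauss_polar hm η hη, gauss_polar hm η hη] at h
  simp only [Nat.add_sub_cancel] at h
  have hm' : (0:ℝ) < m := by exact_mod_cast (by omega)
  have hg : Real.Gamma (((n:ℝ)+m)/2) ≠ 0 := (Real.Gamma_pos_of_pos (by positivity)).ne'
  have e : (((n+1+1:ℕ):ℝ) + m)/2 = ((n:ℝ)+m)/2 + 1 := by push_cast; ring
  rw [e, Real.Gamma_add_one (by positivity)] at h
  apply mul_left_cancel₀ hg
  push_cast at h
  linear_combination 2 * h

lemma LL_one {m : ℕ} (η : EE m) : LL η 1 = (sig m).real Set.univ := by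
  simp [LL]

lemma inner_sphere_le {m : ℕ} (η : EE m) (hη : ‖η‖ = 1) (ω : SS m) : |inner ℝ η (ω : EE m)| ≤ 1 := by
  have := abs_real_inner_le_norm η (ω : EE m)
  have h : ‖(ω : EE m)‖ = 1 := by simp
  rwa [hη, h, one_mul] at this

lemma geg_continuous (lam : ℝ) (k : ℕ) : Continuous (geg lam k) := by
  have : geg lam k = fun w => (gP lam k).eval w := by funext w; rw [gP_eval]
  rw [this]; exact (gP lam k).continuous

lemma lam_nonneg {m : ℕ} (hm : 2 ≤ m) : 0 ≤ ((m:ℝ)-2)/2 := by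
  have : (2:ℝ) ≤ m := by exact_mod_cast hm
  linarith

lemma sphere_bessel {m : ℕ} (hm : 2 ≤ m) (η : EE m) (hη : ‖η‖ = 1) (k : ℕ) (z : ℝ) :
    ∫ ω : SS m, Complex.exp (Complex.I * z * (inner ℝ η (ω : EE m) : ℝ)) *
      (geg (((m:ℝ)-2)/2) k (inner ℝ η (ω : EE m)) : ℝ) ∂(sig m) =
    Complex.I^k * (((sig m).real Set.univ * Real.Gamma (((m:ℝ)-2)/2 + 1) * cc (((m:ℝ)-2)/2) k *
      2^(((m:ℝ)-2)/2) * (z^k * besselJt ((k:ℝ) + ((m:ℝ)-2)/2) z) : ℝ) : ℂ) := by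
  have hlam := lam_nonneg hm
  set lam := ((m:ℝ)-2)/2 with hlamdef
  obtain ⟨N, hN⟩ := geg_bound lam hlam
  set B := ((k:ℝ)+1)^N
  have hs := hasSum_integral_of_dominated_convergence (μ := sig m)
    (F := fun (n : ℕ) (ω : SS m) => (Complex.I * z * (inner ℝ η (ω : EE m) : ℝ))^n / n.factorial * (geg lam k (inner ℝ η (ω : EE m)) : ℝ))
    (f := fun ω => Complex.exp (Complex.I * z * (inner ℝ η (ω : EE m) : ℝ)) *
      (geg lam k (inner ℝ η (ω : EE m)) : ℝ))
    (fun n _ => |z|^n / n.factorial * B) ?_ ?_ ?_ ?_ ?_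
  · have hterm : ∀ n : ℕ, ∫ ω : SS m, (Complex.I * z * (inner ℝ η (ω : EE m) : ℝ))^n / n.factorial * (geg lam k (inner ℝ η (ω : EE m)) : ℝ) ∂(sig m)
        = (Complex.I * z)^n / n.factorial * (LL η (Polynomial.X^n * gP lam k) : ℝ) := by
      intro n
      simp only [LL, LinearMap.coe_mk, AddHom.coe_mk]
      rw [← integral_complex_ofReal, ← integral_const_mul]
      refine integral_congr_ae (.of_forall fun ω => ?_)
      simp only [Polynomial.eval_mul, Polynomial.eval_pow, Polynomial.eval_X, gP_eval]
      push_cast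
      ring
    simp only [hterm] at hs
    obtain ⟨m1, m2⟩ := L_moment (LL η) lam hlam (LL_X hm η hη) (LL_rec hm η hη) k
    have hinj : Function.Injective (fun j : ℕ => k + 2*j) := fun a b h => by
      simp only at h; omega
    rw [← hinj.hasSum_iff] at hs
    · rw [← hs.tsum_eq]
      unfold besselJt
      rw [← tsum_mul_left, ← tsum_mul_left, Complex.ofReal_tsum, ← tsum_mul_left]
      congr 1
      funext j
      simp only [Function.comp, m1, LL_one]
      have hI : Complex.I^(k+2*j) = Complex.I^k * (-1)^j := by
        rw [pow_add, pow_mul, Complex.I_sq]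
      rw [mul_pow, hI]
      have e1 : (j:ℝ) + ((k:ℝ)+lam) + 1 = (k:ℝ) + j + lam + 1 := by ring
      have e2 : (2:ℝ)^((k:ℝ)+lam) = 2^k * 2^lam := by
        rw [Real.rpow_add (by norm_num), Real.rpow_natCast]
      rw [e1, e2]
      have g : Real.Gamma ((k:ℝ) + j + lam+1) ≠ 0 := (Real.Gamma_pos_of_pos (by positivity)).ne'
      have f1 : ((k+2*j).factorial:ℝ) ≠ 0 := by positivity
      have f2 : (j.factorial:ℝ) ≠ 0 := by positivity
      have f3 : (2:ℝ)^lam ≠ 0 := by positivity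
      have main : z^(k+2*j) / (k+2*j).factorial * ((-1)^j * ((sig m).real Set.univ * Real.Gamma (lam + 1) * cc lam k *
          ((k+2*j).factorial / (j.factorial * 2^(k+2*j) * Real.Gamma ((k:ℝ)+j+lam+1))))) =
          (sig m).real Set.univ * Real.Gamma (lam + 1) * cc lam k * 2^lam * (z^k *
            ((-1)^j * (z/2)^(2*j) / (j.factorial * Real.Gamma ((k:ℝ)+j+lam+1) * (2^k * 2^lam)))) := by
        rw [div_pow, pow_add, pow_add]
        field_simp
      rw [← main]
      push_cast
      ring
    · intro n hn
      rw [m2 n (fun j hj => hn ⟨j, hj.symm⟩)]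
      simp
  · intro n
    have := (geg_continuous lam k)
    fun_prop
  · intro n
    refine .of_forall fun ω => ?_
    have h1 := inner_sphere_le η hη ω
    have h2 := hN k _ h1
    rw [norm_mul, norm_div, norm_pow, norm_mul, norm_mul, Complex.norm_I, one_mul, Complex.norm_real, Complex.norm_real, Complex.norm_real, Complex.norm_natCast]
    simp only [Real.norm_eq_abs]
    have : |z| * |inner ℝ η (ω : EE m)| ≤ |z| := mul_le_of_le_one_right (abs_nonneg _) h1
    gcongr
  · exact .of_forall fun ω => (Real.summable_pow_div_factorial |z|).mul_right B
  · exact integrable_const _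
  · refine .of_forall fun ω => ?_
    refine HasSum.mul_right _ ?_
    rw [Complex.exp_eq_exp_ℂ]
    exact NormedSpace.expSeries_div_hasSum_exp _

lemma exists_unit {m : ℕ} (hm : 2 ≤ m) : ∃ η : EE m, ‖η‖ = 1 := by
  have := EE_nontrivial hm
  exact exists_norm_eq (EE m) zero_le_one

lemma sig_pos {m : ℕ} (hm : 2 ≤ m) : 0 < (sig m).real Set.univ := by
  rw [sig_real hm]
  have hm' : (0:ℝ) < m := by exact_mod_cast (by omega)
  have := Real.Gamma_pos_of_pos (show (0:ℝ) < (m:ℝ)/2 by positivity)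
  positivity

lemma cc_nonneg (lam : ℝ) (h : 0 ≤ lam) (k : ℕ) : 0 ≤ cc lam k := by
  induction k with
  | zero => simp [cc]
  | succ k ih => simp only [cc]; positivity

lemma bessel_pre {m : ℕ} (hm : 2 ≤ m) (k : ℕ) (z B : ℝ)
    (hB : ∀ w, |w| ≤ 1 → |geg (((m:ℝ)-2)/2) k w| ≤ B) :
    Real.Gamma (((m:ℝ)-2)/2 + 1) * 2^(((m:ℝ)-2)/2) * cc (((m:ℝ)-2)/2) k * |z^k * besselJt ((k:ℝ) + ((m:ℝ)-2)/2) z| ≤ B := by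
  obtain ⟨η, hη⟩ := exists_unit hm
  have h := congrArg norm (sphere_bessel hm η hη k z)
  have hlam := lam_nonneg hm
  set lam := ((m:ℝ)-2)/2 with hlamdef
  have hσ := sig_pos hm
  have hG := Real.Gamma_pos_of_pos (show 0 < lam + 1 by positivity)
  have hc := cc_nonneg lam hlam k
  have hle : ‖∫ ω : SS m, Complex.exp (Complex.I * z * (inner ℝ η (ω : EE m) : ℝ)) *
      (geg lam k (inner ℝ η (ω : EE m)) : ℝ) ∂(sig m)‖ ≤ B * (sig m).real Set.univ := by
    apply norm_integral_le_of_norm_le_const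
    refine .of_forall fun ω => ?_
    rw [norm_mul, Complex.norm_real]
    have e : Complex.I * z * (inner ℝ η (ω : EE m) : ℝ) = ((z * inner ℝ η (ω : EE m) : ℝ):ℂ) * Complex.I := by
      push_cast; ring
    rw [e, Complex.norm_exp_ofReal_mul_I, one_mul]
    exact hB _ (inner_sphere_le η hη ω)
  rw [h, norm_mul, norm_pow, Complex.norm_I, one_pow, one_mul, Complex.norm_real, norm_mul,
    Real.norm_of_nonneg (by positivity), Real.norm_eq_abs] at hle
  refine le_of_mul_le_mul_left ?_ hσ
  linarith

lemma bessel_b0 {m : ℕ} (hm : 2 ≤ m) : ∃ B, 0 ≤ B ∧ ∀ z, |besselJt (((m:ℝ)-2)/2) z| ≤ B := by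
  have hlam := lam_nonneg hm
  have hG := Real.Gamma_pos_of_pos (show 0 < ((m:ℝ)-2)/2 + 1 by positivity)
  refine ⟨1 / (Real.Gamma (((m:ℝ)-2)/2 + 1) * 2^(((m:ℝ)-2)/2)), by positivity, fun z => ?_⟩
  have := bessel_pre hm 0 z 1 (fun w _ => by simp [geg])
  rw [le_div_iff₀ (by positivity)]
  simp only [cc, pow_zero, one_mul, Nat.cast_zero, zero_add] at this
  linarith

lemma bessel_bk {m : ℕ} (hm : 3 ≤ m) : ∃ B, ∃ N : ℕ, 0 ≤ B ∧ ∀ (k : ℕ) z,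
    |z^k * besselJt ((k:ℝ) + ((m:ℝ)-2)/2) z| ≤ B * ((k:ℝ)+1)^N := by
  have hm2 : 2 ≤ m := by omega
  have hlam := lam_nonneg hm2
  have hG := Real.Gamma_pos_of_pos (show 0 < ((m:ℝ)-2)/2 + 1 by positivity)
  obtain ⟨N, hN⟩ := geg_bound _ hlam
  refine ⟨1 / (Real.Gamma (((m:ℝ)-2)/2 + 1) * 2^(((m:ℝ)-2)/2)), N, by positivity, fun k z => ?_⟩
  have := bessel_pre hm2 k z _ (hN k)
  have hc := cc_ge (((m:ℝ)-2)/2) (by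
    have : (3:ℝ) ≤ m := by exact_mod_cast hm
    linarith) k
  rw [div_mul_eq_mul_div, one_mul, le_div_iff₀ (by positivity)]
  refine le_trans ?_ this
  rw [mul_comm, mul_assoc _ (cc _ _)]
  apply mul_le_mul_of_nonneg_left _ (by positivity)
  nlinarith [abs_nonneg (z^k * besselJt ((k:ℝ) + ((m:ℝ)-2)/2) z)]

lemma Gamma_shift_ge (a : ℝ) (ha : 0 ≤ a) (j : ℕ) : Real.Gamma (a+1) ≤ Real.Gamma ((j:ℝ)+a+1) := by
  induction j with
  | zero => simp
  | succ j ih =>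
    have e : ((j+1:ℕ):ℝ) + a + 1 = ((j:ℝ)+a+1)+1 := by push_cast; ring
    rw [e, Real.Gamma_add_one (s := (j:ℝ)+a+1) (by positivity)]
    have := Real.Gamma_pos_of_pos (show 0 < a + 1 by positivity)
    nlinarith [(Nat.cast_nonneg j : (0:ℝ) ≤ j)]

lemma besselJt_summable (a : ℝ) (ha : 0 ≤ a) (t : ℝ) : Summable fun j : ℕ =>
    ((-1 : ℝ)^j * (t/2) ^ (2*j)) / (j.factorial * Real.Gamma ((j : ℝ) + a + 1) * (2:ℝ)^a) := by
  have hG := Real.Gamma_pos_of_pos (show 0 < a + 1 by positivity)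
  refine Summable.of_norm_bounded (g := fun j : ℕ => ((t/2)^2)^j / j.factorial * (1 / (Real.Gamma (a+1) * 2^a))) ?_ ?_
  · exact (Real.summable_pow_div_factorial _).mul_right _
  · intro j
    have h1 := Gamma_shift_ge a ha j
    have h2 : 0 < Real.Gamma ((j:ℝ)+a+1) := lt_of_lt_of_le hG h1
    rw [norm_div, norm_mul, norm_pow, norm_neg, norm_one, one_pow, one_mul, pow_mul, Real.norm_of_nonneg (by positivity),
      Real.norm_of_nonneg (by positivity), ← mul_one_div, mul_assoc]
    have e : ((t/2)^2)^j / j.factorial * (1 / (Real.Gamma (a+1) * 2^a)) = ((t/2)^2)^j * (1/(j.factorial * (Real.Gamma (a+1) * 2^a))) := by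
      field_simp
    rw [e]
    gcongr

lemma besselJt_rec (a : ℝ) (ha : 0 ≤ a) (t : ℝ) :
    2 * (a+1) * besselJt (a+1) t = besselJt a t + t^2 * besselJt (a+2) t := by
  have s0 := (besselJt_summable a ha t).hasSum
  have s1 := (besselJt_summable (a+1) (by positivity) t).hasSum
  have s2 := (besselJt_summable (a+2) (by positivity) t).hasSum
  have d := (s1.mul_left (2*(a+1))).sub s0
  have s2' := s2.mul_left (t^2)
  have := (hasSum_nat_add_iff' 1).2 d
  have key := this.unique (f := _) (by
    convert! s2' using 1
    funext j
    have g0 : Real.Gamma (a+1) ≠ 0 := (Real.Gamma_pos_of_pos (by positivity)).ne'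
    have g : Real.Gamma ((j:ℝ) + a + 2) ≠ 0 := (Real.Gamma_pos_of_pos (by positivity)).ne'
    have e1 : Real.Gamma (((j+1:ℕ):ℝ) + (a+1) + 1) = ((j:ℝ)+a+2) * Real.Gamma ((j:ℝ)+a+2) := by
      rw [← Real.Gamma_add_one (by positivity)]; congr 1; push_cast; ring
    have e2 : Real.Gamma ((j:ℝ) + (a+2) + 1) = ((j:ℝ)+a+2) * Real.Gamma ((j:ℝ)+a+2) := by
      rw [← Real.Gamma_add_one (by positivity)]; congr 1; ring
    have e3 : Real.Gamma (((j+1:ℕ):ℝ) + a + 1) = Real.Gamma ((j:ℝ)+a+2) := by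
      congr 1; push_cast; ring
    rw [e1, e2, e3, Real.rpow_add (by norm_num), Real.rpow_add (by norm_num), Nat.factorial_succ]
    have f2 : (j.factorial:ℝ) ≠ 0 := by positivity
    have f3 : (2:ℝ)^a ≠ 0 := by positivity
    have f4 : (j:ℝ)+a+2 ≠ 0 := by positivity
    have f5 : (2:ℝ)^(2:ℝ) = 4 := by norm_num
    rw [f5, Real.rpow_one]
    push_cast
    field_simp
    ring)
  simp only [Finset.sum_range_one] at key
  have z0 : 2 * (a+1) * ((-1)^0 * (t/2)^(2*0) / ((Nat.factorial 0 : ℝ) * Real.Gamma (((0:ℕ):ℝ) + (a+1) + 1) * 2^(a+1))) -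
      (-1)^0 * (t/2)^(2*0) / ((Nat.factorial 0 : ℝ) * Real.Gamma (((0:ℕ):ℝ) + a + 1) * 2^a) = 0 := by
    have g0 : Real.Gamma (a+1) ≠ 0 := (Real.Gamma_pos_of_pos (by positivity)).ne'
    have f3 : (2:ℝ)^a ≠ 0 := by positivity
    have f4 : a + 1 ≠ 0 := by positivity
    simp only [Nat.cast_zero, zero_add, Real.Gamma_add_one f4, Real.rpow_add (show (0:ℝ) < 2 by norm_num), Real.rpow_one]
    simp
    field_simp
    simp
  rw [z0] at key
  unfold besselJt
  linarith

def gk (lam : ℝ) (k : ℕ) (z : ℝ) : ℝ := z^k * besselJt ((k:ℝ) + lam) z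

lemma gk_rec (lam : ℝ) (h : 0 ≤ lam) (k : ℕ) (z : ℝ) :
    2 * ((k:ℝ) + lam + 1) * gk lam (k+1) z = z * (gk lam k z + gk lam (k+2) z) := by
  have := besselJt_rec ((k:ℝ)+lam) (by positivity) z
  have e1 : ((k+1:ℕ):ℝ) + lam = (k:ℝ)+lam+1 := by push_cast; ring
  have e2 : ((k+2:ℕ):ℝ) + lam = (k:ℝ)+lam+2 := by push_cast; ring
  simp only [gk, e1, e2]
  linear_combination z^(k+1) * this

lemma gk_base {m : ℕ} (hm : 2 ≤ m) : ∃ B, ∃ N : ℕ, 0 ≤ B ∧ ∀ (k : ℕ) z, 0 ≤ z →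
    |gk (((m:ℝ)-2)/2) k z| ≤ B * (1+z) * ((k:ℝ)+1)^N := by
  obtain ⟨B0, hB0, h0⟩ := bessel_b0 hm
  obtain ⟨B1, N, hB1, h1⟩ := bessel_bk (m := m+2) (by omega)
  refine ⟨B0 + B1, N, by positivity, fun k z hz => ?_⟩
  rcases k with _ | k
  · simp only [gk, pow_zero, one_mul, Nat.cast_zero, zero_add, one_pow, mul_one]
    refine (h0 z).trans ?_
    nlinarith [mul_nonneg hB0 hz, mul_nonneg hB1 hz]
  · have h := h1 k z
    have e : (k:ℝ) + (((m+2:ℕ):ℝ)-2)/2 = ((k+1:ℕ):ℝ) + ((m:ℝ)-2)/2 := by push_cast; ring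
    rw [e] at h
    have e2 : gk (((m:ℝ)-2)/2) (k+1) z = z * (z^k * besselJt (((k+1:ℕ):ℝ) + ((m:ℝ)-2)/2) z) := by
      simp only [gk]; ring
    rw [e2, abs_mul, abs_of_nonneg hz]
    calc z * _ ≤ z * (B1 * ((k:ℝ)+1)^N) := by gcongr
      _ ≤ (1+z) * ((B0+B1) * (((k+1:ℕ):ℝ)+1)^N) := by
        gcongr <;> push_cast <;> linarith
      _ = _ := by ring

lemma gk_step {m : ℕ} (hm : 2 ≤ m) : ∃ N : ℕ, ∀ s : ℕ, ∃ B, 0 ≤ B ∧ ∀ (k : ℕ) z, 0 ≤ z →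
    |gk (((m:ℝ)-2)/2) k z| * ((k:ℝ)+1)^s ≤ B * (1+z)^(s+1) * ((k:ℝ)+1)^N := by
  obtain ⟨B0, N, hB0, h0⟩ := gk_base hm
  have hlam := lam_nonneg hm
  set lam := ((m:ℝ)-2)/2 with hl
  refine ⟨N, fun s => ?_⟩
  induction s with
  | zero => exact ⟨B0, hB0, fun k z hz => by simpa using h0 k z hz⟩
  | succ s ih =>
    obtain ⟨B, hB, h⟩ := ih
    refine ⟨B0 + 2^(s+1) * (B + 2^N * B), by positivity, fun k z hz => ?_⟩
    rcases k with _ | k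
    · have := h0 0 z hz
      simp only [Nat.cast_zero, zero_add, one_pow, mul_one] at this ⊢
      refine this.trans ?_
      have : (1+z) ≤ (1+z)^(s+1+1) := le_self_pow₀ (by linarith) (by omega)
      have hp : 0 ≤ 2^(s+1) * (B + 2^N * B) := by positivity
      calc B0 * (1+z) ≤ B0 * (1+z)^(s+1+1) := by gcongr
        _ ≤ _ := by gcongr; linarith
    · have hr := gk_rec lam hlam k z
      have hk : (0:ℝ) ≤ k := Nat.cast_nonneg k
      have h1 := h k z hz
      have h2 := h (k+2) z hz
      have A : (2 * ((k:ℝ)+lam+1)) * |gk lam (k+1) z| ≤ z * (|gk lam k z| + |gk lam (k+2) z|) := by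
        have := congrArg abs hr
        rw [abs_mul, abs_mul z, abs_of_nonneg hz, abs_of_nonneg (by positivity : 0 ≤ 2 * ((k:ℝ)+lam+1))] at this
        rw [this]; gcongr; exact abs_add_le _ _
      have A2 : ((k:ℝ)+1) * |gk lam (k+1) z| ≤ z * (|gk lam k z| + |gk lam (k+2) z|) := by
        refine le_trans ?_ A
        gcongr; linarith
      have p2 : ((k:ℝ)+1)^s ≤ (((k+2:ℕ):ℝ)+1)^s := by gcongr; push_cast; linarith
      have h2' : |gk lam (k+2) z| * ((k:ℝ)+1)^s ≤ B * (1+z)^(s+1) * (2^N * (((k+1:ℕ):ℝ)+1)^N) := by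
        refine (mul_le_mul_of_nonneg_left p2 (abs_nonneg _)).trans (h2.trans ?_)
        rw [← mul_pow]; gcongr; push_cast; linarith
      have h1' : |gk lam k z| * ((k:ℝ)+1)^s ≤ B * (1+z)^(s+1) * (((k+1:ℕ):ℝ)+1)^N := by
        refine h1.trans ?_
        gcongr; push_cast; linarith
      have p3 : (((k+1:ℕ):ℝ)+1)^(s+1) ≤ 2^(s+1) * ((k:ℝ)+1)^(s+1) := by
        rw [← mul_pow]; gcongr; push_cast; linarith
      calc |gk lam (k+1) z| * (((k+1:ℕ):ℝ)+1)^(s+1)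
          ≤ |gk lam (k+1) z| * (2^(s+1) * ((k:ℝ)+1)^(s+1)) := by gcongr
        _ = 2^(s+1) * ((((k:ℝ)+1) * |gk lam (k+1) z|) * ((k:ℝ)+1)^s) := by ring
        _ ≤ 2^(s+1) * ((z * (|gk lam k z| + |gk lam (k+2) z|)) * ((k:ℝ)+1)^s) := by gcongr
        _ = 2^(s+1) * (z * (|gk lam k z| * ((k:ℝ)+1)^s + |gk lam (k+2) z| * ((k:ℝ)+1)^s)) := by ring
        _ ≤ 2^(s+1) * ((1+z) * (B * (1+z)^(s+1) * (((k+1:ℕ):ℝ)+1)^N + B * (1+z)^(s+1) * (2^N * (((k+1:ℕ):ℝ)+1)^N))) := by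
          gcongr; linarith
        _ = (2^(s+1) * (B + 2^N*B)) * (1+z)^(s+1+1) * (((k+1:ℕ):ℝ)+1)^N := by ring
        _ ≤ _ := by gcongr; linarith

lemma gk_decay {m : ℕ} (hm : 2 ≤ m) (S : ℕ) : ∃ B, ∃ Q : ℕ, 0 ≤ B ∧ ∀ (k : ℕ) z, 0 ≤ z →
    |gk (((m:ℝ)-2)/2) k z| * ((k:ℝ)+1)^S ≤ B * (1+z)^Q := by
  obtain ⟨N, h⟩ := gk_step hm
  obtain ⟨B, hB, hb⟩ := h (S + N)
  refine ⟨B, S+N+1, hB, fun k z hz => ?_⟩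
  have := hb k z hz
  have hp : (0:ℝ) < ((k:ℝ)+1)^N := by positivity
  rw [pow_add, ← mul_assoc] at this
  exact le_of_mul_le_mul_right this hp

/-- mean values -/
lemma mean_geg {m : ℕ} (hm : 2 ≤ m) (η : EE m) (hη : ‖η‖ = 1) (k : ℕ) (hk : k ≠ 0) :
    ∫ ω : SS m, geg (((m:ℝ)-2)/2) k (inner ℝ η (ω : EE m)) ∂(sig m) = 0 := by
  have := (L_moment (LL η) _ (lam_nonneg hm) (LL_X hm η hη) (LL_rec hm η hη) k).2 0 (by omega)
  rw [pow_zero, one_mul] at this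
  simpa [LL, gP_eval] using this

lemma gegT_eq (lam : ℝ) (k : ℕ) (w : ℝ) : gegT lam k w =
   (gP (lam+1) k - (if 2 ≤ k then gP (lam+1) (k-2) else 0)).eval w := by
  simp only [gegT, Polynomial.eval_sub, gP_eval]
  split_ifs <;> simp [gP_eval]

lemma mean_gegT {m : ℕ} (hm : 2 ≤ m) (η : EE m) (hη : ‖η‖ = 1) (k : ℕ) (hk : k ≠ 0) :
    ∫ ω : SS m, gegT (((m:ℝ)-2)/2) k (inner ℝ η (ω : EE m)) ∂(sig m) = 0 := by
  simp only [gegT_eq]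
  change LL η _ = 0
  rcases k with _ | _ | k
  · exact absurd rfl hk
  · have h := L_succ (LL η) _ (LL_X hm η hη) (LL_rec hm η hη) 0
    simp only [zero_add] at h ⊢
    simp only [show ¬ (2 ≤ 1) by norm_num, if_false, sub_zero]
    rw [h]
    simp [gP, LL_X hm η hη]
  · rw [if_pos (by omega), map_sub, sub_eq_zero]
    exact L_two (LL η) _ (lam_nonneg hm) (LL_X hm η hη) (LL_rec hm η hη) k

lemma gegT_continuous (lam : ℝ) (k : ℕ) : Continuous (gegT lam k) := by
  have : gegT lam k = fun w => (gP (lam+1) k - (if 2 ≤ k then gP (lam+1) (k-2) else 0)).eval w := by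
    funext w; rw [gegT_eq]
  rw [this]; exact Polynomial.continuous _

lemma gegT_bound (lam : ℝ) (h : 0 ≤ lam) : ∃ N : ℕ, ∀ k w, |w| ≤ 1 → |gegT lam k w| ≤ 2 * ((k:ℝ)+1)^N := by
  obtain ⟨N, hN⟩ := geg_bound (lam+1) (by positivity)
  refine ⟨N, fun k w hw => ?_⟩
  have h1 := hN k w hw
  have h2 : |(if 2 ≤ k then geg (lam + 1) (k - 2) w else 0)| ≤ ((k:ℝ)+1)^N := by
    split_ifs with hk
    · refine (hN (k-2) w hw).trans ?_
      gcongr; omega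
    · simp; positivity
  have h3 := norm_sub_le (geg (lam + 1) k w) (if 2 ≤ k then geg (lam + 1) (k - 2) w else 0)
  simp only [Real.norm_eq_abs] at h3
  unfold gegT
  linarith

lemma summable_sq : Summable fun k : ℕ => 1 / ((k:ℝ)+1)^2 := by
  have := (summable_nat_add_iff 1).2 (Real.summable_one_div_nat_pow (p := 2)|>.2 (by norm_num))
  simpa using this

lemma series_int {m : ℕ} (T : ℕ → EE m → ℂ) (G : EE m → ℝ) (hG : Integrable G)
    (hT : ∀ k, Measurable (T k)) (hb : ∀ k x, ‖T k x‖ ≤ G x * (1 / ((k:ℝ)+1)^2)) :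
    Measurable (fun x => ∑' k, T k x) ∧ Integrable (fun x => ∑' k, T k x) ∧
      HasSum (fun k => ∫ x, T k x) (∫ x, ∑' k, T k x) := by
  have hs : ∀ x, Summable fun k => T k x := fun x =>
    Summable.of_norm_bounded (summable_sq.mul_left (G x)) (fun k => hb k x)
  have hmeas : Measurable (fun x => ∑' k, T k x) := by
    refine measurable_of_tendsto_metrizable (f := fun n x => ∑ k ∈ Finset.range n, T k x) ?_ ?_
    · intro n; exact Finset.measurable_sum _ (fun k _ => hT k)
    · rw [tendsto_pi_nhds]; intro x; exact (hs x).hasSum.tendsto_sum_nat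
  have hbi : Integrable (fun x => ∑' k : ℕ, G x * (1 / ((k:ℝ)+1)^2)) := by
    simp only [tsum_mul_left]; exact hG.mul_const _
  refine ⟨hmeas, hbi.mono' hmeas.aestronglyMeasurable (.of_forall fun x => ?_), ?_⟩
  · exact tsum_of_norm_bounded (summable_sq.mul_left (G x)).hasSum (fun k => hb k x)
  · exact hasSum_integral_of_dominated_convergence _ (fun k => (hT k).aestronglyMeasurable)
      (fun k => .of_forall (hb k)) (.of_forall fun x => summable_sq.mul_left (G x)) hbi
      (.of_forall fun x => (hs x).hasSum)

lemma besselJt_measurable (a : ℝ) (ha : 0 ≤ a) : Measurable (besselJt a) := by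
  refine measurable_of_tendsto_metrizable (f := fun n t => ∑ j ∈ Finset.range n,
    ((-1 : ℝ)^j * (t/2) ^ (2*j)) / (j.factorial * Real.Gamma ((j : ℝ) + a + 1) * (2:ℝ)^a)) ?_ ?_
  · intro n; fun_prop
  · rw [tendsto_pi_nhds]; intro t; exact (besselJt_summable a ha t).hasSum.tendsto_sum_nat

lemma gk_measurable (lam : ℝ) (h : 0 ≤ lam) (k : ℕ) : Measurable (gk lam k) := by
  have := besselJt_measurable ((k:ℝ)+lam) (by positivity)
  unfold gk
  fun_prop

def ww {m : ℕ} (Y x : EE m) : ℝ := inner ℝ x Y / (‖x‖ * ‖Y‖)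

lemma ww_le {m : ℕ} (Y x : EE m) : |ww Y x| ≤ 1 := abs_real_inner_div_norm_mul_norm_le_one x Y

lemma ww_measurable {m : ℕ} (Y : EE m) : Measurable (ww Y) := by
  unfold ww; fun_prop

/-- general bound for a term -/
lemma term_bound {m : ℕ} (hm : 2 ≤ m) (p : ℕ → ℝ → ℝ) (N : ℕ)
    (hp : ∀ k w, |w| ≤ 1 → |p k w| ≤ 2 * ((k:ℝ)+1)^N) :
    ∃ B, ∃ Q : ℕ, 0 ≤ B ∧ ∀ k z w, 0 ≤ z → |w| ≤ 1 →
      |gk (((m:ℝ)-2)/2) k z * p k w| ≤ B * (1+z)^Q * (1 / ((k:ℝ)+1)^2) := by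
  obtain ⟨B, Q, hB, h⟩ := gk_decay hm (N+2)
  refine ⟨2*B, Q, by positivity, fun k z w hz hw => ?_⟩
  rw [mul_one_div, le_div_iff₀ (by positivity), abs_mul]
  calc _ ≤ |gk (((m:ℝ)-2)/2) k z| * (2 * ((k:ℝ)+1)^N) * ((k:ℝ)+1)^2 := by gcongr; exact hp k w hw
    _ = 2 * (|gk (((m:ℝ)-2)/2) k z| * ((k:ℝ)+1)^(N+2)) := by ring
    _ ≤ 2 * (B * (1+z)^Q) := mul_le_mul_of_nonneg_left (h k z hz) (by norm_num)
    _ = _ := by ring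

lemma one_add_mul_pow_le (a c : ℝ) (ha : 0 ≤ a) (hc : 0 ≤ c) (Q : ℕ) :
    (1 + a*c)^Q ≤ (1+c)^Q * (1+a)^Q := by
  rw [← mul_pow]; gcongr; nlinarith

lemma series_scalar {m : ℕ} (hm : 2 ≤ m) (F : EE m → ℝ) (f₀ : ℝ → ℝ) (hF : Continuous F)
    (hrad : ∀ x, F x = f₀ ‖x‖)
    (hFi : ∀ Q : ℕ, Integrable (fun x => |F x| * (1+‖x‖)^Q)) (Y : EE m) (hY : Y ≠ 0)
    (p : ℕ → ℝ → ℝ) (N : ℕ) (hp : ∀ k w, |w| ≤ 1 → |p k w| ≤ 2 * ((k:ℝ)+1)^N)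
    (hpc : ∀ k, Continuous (p k)) (hp0 : ∀ w, p 0 w = 1)
    (hmean : ∀ η : EE m, ‖η‖ = 1 → ∀ k ≠ 0, ∫ ω : SS m, p k (inner ℝ η (ω : EE m)) ∂(sig m) = 0)
    (a : ℕ → ℂ) (ha : ∀ k, ‖a k‖ ≤ 2) :
    Integrable (fun x => (F x : ℂ) * ∑' k, a k * ((gk (((m:ℝ)-2)/2) k (‖x‖*‖Y‖) * p k (ww Y x) : ℝ) : ℂ)) ∧
    ∫ x, (F x : ℂ) * ∑' k, a k * ((gk (((m:ℝ)-2)/2) k (‖x‖*‖Y‖) * p k (ww Y x) : ℝ) : ℂ) =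
      a 0 * ((∫ x, F x * besselJt (((m:ℝ)-2)/2) (‖x‖*‖Y‖) : ℝ) : ℂ) := by
  have hlam := lam_nonneg hm
  obtain ⟨B, Q, hB, hb⟩ := term_bound hm p N hp
  set lam := ((m:ℝ)-2)/2 with hl
  set T : ℕ → EE m → ℂ := fun k x => (F x : ℂ) * (a k * ((gk lam k (‖x‖*‖Y‖) * p k (ww Y x) : ℝ) : ℂ)) with hTd
  have hTm : ∀ k, Measurable (T k) := by
    intro k
    have h1 := gk_measurable lam hlam k
    have h2 := (hpc k).measurable.comp (ww_measurable Y)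
    have h3 : Measurable fun x : EE m => gk lam k (‖x‖*‖Y‖) := h1.comp (by fun_prop)
    have h4 : Measurable fun x : EE m => gk lam k (‖x‖*‖Y‖) * p k (ww Y x) := h3.mul h2
    exact (Complex.measurable_ofReal.comp hF.measurable).mul ((Complex.measurable_ofReal.comp h4).const_mul _)
  have hTb : ∀ k x, ‖T k x‖ ≤ (2*B*(1+‖Y‖)^Q * (|F x| * (1+‖x‖)^Q)) * (1 / ((k:ℝ)+1)^2) := by
    intro k x
    simp only [hTd, norm_mul, Complex.norm_real]
    rw [← norm_mul]
    have h1 := hb k (‖x‖*‖Y‖) (ww Y x) (by positivity) (ww_le Y x)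
    have h2 := one_add_mul_pow_le ‖x‖ ‖Y‖ (by positivity) (by positivity) Q
    simp only [Real.norm_eq_abs]
    calc |F x| * (‖a k‖ * _) ≤ |F x| * (2 * (B * ((1+‖Y‖)^Q * (1+‖x‖)^Q) * (1 / ((k:ℝ)+1)^2))) := by
          gcongr
          · exact ha k
          · exact h1.trans (by gcongr)
      _ = _ := by ring
  obtain ⟨-, hI, hS⟩ := series_int T _ ((hFi Q).const_mul (2*B*(1+‖Y‖)^Q)) hTm hTb
  have hTi : ∀ k, Integrable (T k) := fun k =>
    (((hFi Q).const_mul (2*B*(1+‖Y‖)^Q)).mul_const (1 / ((k:ℝ)+1)^2)).mono' (hTm k).aestronglyMeasurable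
      (.of_forall (hTb k))
  have hz : ∀ k ≠ 0, ∫ x, T k x = 0 := by
    intro k hk
    rw [polar hm _ (hTi k)]
    rw [setIntegral_congr_fun (g := fun _ => (0:ℂ)) measurableSet_Ioi]
    · simp
    · intro r hr
      have hr : 0 < r := hr
      have hη : ‖(‖Y‖⁻¹ • Y)‖ = 1 := by
        rw [norm_smul, norm_inv, norm_norm, inv_mul_cancel₀ (norm_ne_zero_iff.2 hY)]
      have : ∀ ω : SS m, T k (r • (ω:EE m)) =
          ((f₀ r : ℂ) * (a k * (gk lam k (r*‖Y‖) : ℝ))) * ((p k (inner ℝ (‖Y‖⁻¹ • Y) (ω:EE m)) : ℝ) : ℂ) := by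
        intro ω
        have hn : ‖r • (ω:EE m)‖ = r := by
          rw [norm_smul, Real.norm_of_nonneg hr.le]; simp
        have hwv : ww Y (r • (ω:EE m)) = inner ℝ (‖Y‖⁻¹ • Y) (ω:EE m) := by
          rw [ww, hn, real_inner_smul_left, real_inner_smul_left, real_inner_comm]
          have := norm_ne_zero_iff.2 hY
          field_simp
        simp only [hTd, hrad, hn, hwv]
        push_cast; ring
      simp only [this]
      rw [integral_const_mul, integral_complex_ofReal, hmean _ hη k hk]
      simp
  have h0 := hS.unique (hasSum_single 0 hz)
  have hE : (fun x => ∑' k, T k x) = (fun x => (F x : ℂ) * ∑' k, a k * ((gk lam k (‖x‖*‖Y‖) * p k (ww Y x) : ℝ) : ℂ)) := by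
    funext x; simp only [hTd, tsum_mul_left]
  rw [hE] at hI h0
  refine ⟨hI, h0.trans ?_⟩
  rw [← integral_complex_ofReal, ← integral_const_mul]
  congr 1; funext x
  simp only [hTd, hp0, gk]
  push_cast; simp; ring

lemma series_C {m : ℕ} (hm : 2 ≤ m) (F : EE m → ℝ) (hF : Continuous F)
    (hFi : ∀ Q : ℕ, Integrable (fun x => |F x| * (1+‖x‖)^Q)) (Y : EE m)
    (a : ℕ → ℂ) (ha : ∀ k, ‖a k‖ ≤ 2) :
    Integrable (fun x => (F x : ℂ) * ∑' k : ℕ, a k * (((‖x‖*‖Y‖)^(k-1) * besselJt ((k:ℝ) + ((m:ℝ)-2)/2) (‖x‖*‖Y‖) *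
      (if 1 ≤ k then geg (((m:ℝ)-2)/2+1) (k-1) (ww Y x) else 0) : ℝ) : ℂ)) := by
  have hlam := lam_nonneg hm
  obtain ⟨N, hN⟩ := geg_bound (((m:ℝ)-2)/2+1) (by positivity)
  have hl2 : (((m+2:ℕ):ℝ)-2)/2 = ((m:ℝ)-2)/2+1 := by push_cast; ring
  obtain ⟨B, Q, hB, hb⟩ := term_bound (m := m+2) (by omega) (geg (((m:ℝ)-2)/2+1)) N
    (fun k w hw => (hN k w hw).trans (by
      have : (0:ℝ) ≤ ((k:ℝ)+1)^N := by positivity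
      linarith))
  rw [hl2] at hb
  set lam := ((m:ℝ)-2)/2 with hl
  set t : ℕ → EE m → ℝ := fun k x => (‖x‖*‖Y‖)^(k-1) * besselJt ((k:ℝ) + lam) (‖x‖*‖Y‖) *
      (if 1 ≤ k then geg (lam+1) (k-1) (ww Y x) else 0) with ht
  have htb : ∀ k x, |t k x| ≤ (4 * B * (1+‖x‖*‖Y‖)^Q) * (1 / ((k:ℝ)+1)^2) := by
    intro k x
    rcases k with _ | k
    · simp only [ht]; simp; positivity
    · have h := hb k (‖x‖*‖Y‖) (ww Y x) (by positivity) (ww_le Y x)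
      have e : t (k+1) x = gk (lam+1) k (‖x‖*‖Y‖) * geg (lam+1) k (ww Y x) := by
        simp only [ht, gk, Nat.add_sub_cancel, if_pos (Nat.le_add_left 1 k)]
        congr 3
        push_cast; ring
      rw [e]
      refine h.trans ?_
      have : 1 / ((k:ℝ)+1)^2 ≤ 4 * (1 / (((k+1:ℕ):ℝ)+1)^2) := by
        rw [mul_one_div, div_le_div_iff₀ (by positivity) (by positivity)]
        push_cast
        nlinarith [(Nat.cast_nonneg k : (0:ℝ) ≤ k)]
      calc _ ≤ B * (1 + ‖x‖*‖Y‖)^Q * (4 * (1 / (((k+1:ℕ):ℝ)+1)^2)) := by gcongr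
        _ = _ := by ring
  set T : ℕ → EE m → ℂ := fun k x => (F x : ℂ) * (a k * ((t k x : ℝ) : ℂ)) with hTd
  have hTm : ∀ k, Measurable (T k) := by
    intro k
    have h1 := besselJt_measurable ((k:ℝ)+lam) (by positivity)
    have h2 : Measurable fun x : EE m => (if 1 ≤ k then geg (lam+1) (k-1) (ww Y x) else 0) := by
      split_ifs
      · exact (geg_continuous _ _).measurable.comp (ww_measurable Y)
      · exact measurable_const
    have h3 : Measurable fun x : EE m => besselJt ((k:ℝ) + lam) (‖x‖*‖Y‖) := h1.comp (by fun_prop)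
    have h4 : Measurable (t k) := by
      refine Measurable.mul (Measurable.mul (by fun_prop) h3) h2
    exact (Complex.measurable_ofReal.comp hF.measurable).mul ((Complex.measurable_ofReal.comp h4).const_mul _)
  have hTb : ∀ k x, ‖T k x‖ ≤ (2*(4*B)*(1+‖Y‖)^Q * (|F x| * (1+‖x‖)^Q)) * (1 / ((k:ℝ)+1)^2) := by
    intro k x
    simp only [hTd, norm_mul, Complex.norm_real]
    have h1 := htb k x
    have h2 := one_add_mul_pow_le ‖x‖ ‖Y‖ (by positivity) (by positivity) Q
    simp only [Real.norm_eq_abs]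
    calc |F x| * (‖a k‖ * _) ≤ |F x| * (2 * (4 * B * ((1+‖Y‖)^Q * (1+‖x‖)^Q) * (1 / ((k:ℝ)+1)^2))) := by
          gcongr
          · exact ha k
          · exact h1.trans (by gcongr)
      _ = _ := by ring
  obtain ⟨-, hI, hS⟩ := series_int T _ ((hFi Q).const_mul (2*(4*B)*(1+‖Y‖)^Q)) hTm hTb
  simpa only [hTd, tsum_mul_left] using hI

lemma mul_smul_one {m : ℕ} (a : Cl m) (c : ℝ) : a * (c • (1 : Cl m)) = c • a := by
  funext S
  change ∑ T : Finset (Fin m),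
    ((-1 : ℂ) ^ ((((T ×ˢ (symmDiff T S)).filter fun p : Fin m × Fin m => p.2 < p.1).card)
        + (T ∩ (symmDiff T S)).card))
      * a T * (c • (if symmDiff T S = (∅ : Finset (Fin m)) then (1:ℂ) else 0)) = c • a S
  rw [Finset.sum_eq_single S]
  · simp [mul_comm]
  · intro T _ hT
    have : symmDiff T S ≠ ∅ := by
      rw [← Finset.bot_eq_empty, Ne, symmDiff_eq_bot]; exact hT
    simp [this]
  · simp

def wl {m : ℕ} (y : Fin m → ℝ) : EE m →ₗ[ℝ] Cl m where
  toFun x := wedge m x.ofLp y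
  map_add' a b := by
    simp only [wedge, ← Finset.sum_add_distrib]
    refine Finset.sum_congr rfl fun j _ => Finset.sum_congr rfl fun k _ => ?_
    split_ifs
    · rw [← add_smul]; congr 1; simp; ring
    · simp
  map_smul' c a := by
    simp only [wedge, Finset.smul_sum, RingHom.id_apply]
    refine Finset.sum_congr rfl fun j _ => Finset.sum_congr rfl fun k _ => ?_
    split_ifs
    · funext S
      change ((_:ℝ):ℂ) * _ = c • (_ * _)
      rw [Complex.real_smul, ← mul_assoc]; congr 1; simp; ring
    · simp

lemma wedge_self {m : ℕ} (y : Fin m → ℝ) : wedge m y y = 0 := by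
  simp [wedge, mul_comm]

lemma wl_bound {m : ℕ} (y : Fin m → ℝ) : ∃ K, 0 ≤ K ∧ ∀ x : EE m, ‖wl y x‖ ≤ K * ‖x‖ := by
  let g : EE m →ₗ[ℝ] (Finset (Fin m) → ℂ) := wl y
  exact ⟨‖LinearMap.toContinuousLinearMap g‖, norm_nonneg _, fun x => (LinearMap.toContinuousLinearMap g).le_opNorm x⟩

lemma wl_cont {m : ℕ} (y : Fin m → ℝ) : Continuous (wl y) := by
  let g : EE m →ₗ[ℝ] (Finset (Fin m) → ℂ) := wl y
  exact (LinearMap.toContinuousLinearMap g).continuous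

lemma nrm_ofLp {m : ℕ} (x : EE m) : nrm x.ofLp = ‖x‖ := by
  rw [nrm, ip, EuclideanSpace.norm_eq]
  congr 1
  refine Finset.sum_congr rfl fun i _ => ?_
  rw [Real.norm_eq_abs, sq_abs, sq]

lemma ip_ofLp {m : ℕ} (x y : EE m) : ip x.ofLp y.ofLp = inner ℝ x y := by
  rw [ip, PiLp.inner_apply]
  refine Finset.sum_congr rfl fun i _ => ?_
  simp [mul_comm]

lemma schwartz_int {m : ℕ} (f : SchwartzMap (Fin m → ℝ) ℝ) :
    Continuous (fun x : EE m => f x.ofLp) ∧ ∀ Q : ℕ, Integrable (fun x : EE m => |f x.ofLp| * (1+‖x‖)^Q) := by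
  have hc : Continuous (fun x : EE m => f x.ofLp) := f.continuous.comp (by fun_prop)
  refine ⟨hc, fun Q => ?_⟩
  let g : SchwartzMap (EE m) ℝ := SchwartzMap.compCLMOfContinuousLinearEquiv ℝ (EuclideanSpace.equiv (Fin m) ℝ) f
  have hg : ∀ x, g x = f x.ofLp := fun x => rfl
  have h1 := g.integrable_pow_mul volume Q
  have h0 := g.integrable_pow_mul volume 0
  refine ((h0.add h1).const_mul (2^(Q-1))).mono' ?_ (.of_forall fun x => ?_)
  · exact (hc.abs.mul (by fun_prop)).aestronglyMeasurable
  · have := add_pow_le (zero_le_one (α := ℝ)) (norm_nonneg x) Q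
    simp only [hg, Pi.add_apply, norm_mul, Real.norm_eq_abs, abs_abs]
    rw [abs_of_nonneg (show 0 ≤ (1+‖x‖)^Q by positivity)]
    calc _ ≤ |f x.ofLp| * (2^(Q-1) * (1^Q + ‖x‖^Q)) := by gcongr
      _ = _ := by simp; ring

lemma int_transfer {E : Type*} [NormedAddCommGroup E] [NormedSpace ℝ E] {m : ℕ} (g : (Fin m → ℝ) → E) :
    ∫ x, g x = ∫ x : EE m, g x.ofLp := by
  have := (PiLp.volume_preserving_ofLp (Fin m)).integral_comp (MeasurableEquiv.toLp 2 (Fin m → ℝ)).symm.measurableEmbedding g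
  exact this.symm

/-- the reflection -/
lemma reflect {m : ℕ} (Y : EE m) (H : EE m → Cl m)
    (hH : ∀ R : EE m ≃ₗᵢ[ℝ] EE m, R Y = Y → (∀ x, R x + x ∈ Submodule.span ℝ {Y}) → ∀ x, H (R x) = - H x) :
    ∫ x, H x = 0 := by
  have hR := hH (Submodule.span ℝ {Y}).reflection ?_ ?_
  · have h := ((Submodule.span ℝ {Y}).reflection.measurePreserving).integral_comp
      ((Submodule.span ℝ {Y}).reflection.toHomeomorph.measurableEmbedding) H
    have h2 : ∫ x, H ((Submodule.span ℝ {Y}).reflection x) = ∫ x, H x := h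
    simp only [hR, integral_neg] at h2
    have h3 : (2:ℝ) • (∫ x, H x) = 0 := by
      rw [two_smul]; nth_rewrite 1 [← h2]; simp
    exact (smul_eq_zero.1 h3).resolve_left (by norm_num)
  · exact Submodule.reflection_mem_subspace_eq_self (Submodule.mem_span_singleton_self Y)
  · intro x
    rw [Submodule.reflection_apply]
    simp only [sub_add_cancel]
    exact Submodule.smul_of_tower_mem _ 2 (Submodule.coe_mem _)

def s1 (m : ℕ) : ℂ →ₗ[ℝ] Cl m where
  toFun c := c • (1 : Cl m)
  map_add' a b := add_smul _ _ _
  map_smul' r c := by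
    funext S
    change (r • c) * _ = r • (c * _)
    rw [smul_mul_assoc]

lemma s1_real {m : ℕ} (r : ℝ) : s1 m (r : ℂ) = r • (1 : Cl m) := by
  funext S
  change (r : ℂ) * _ = r • _
  rw [Complex.real_smul]

def s1c (m : ℕ) : ℂ →L[ℝ] Cl m :=
  let g : ℂ →ₗ[ℝ] (Finset (Fin m) → ℂ) := s1 m
  (LinearMap.toContinuousLinearMap g : ℂ →L[ℝ] (Finset (Fin m) → ℂ))

lemma s1c_apply {m : ℕ} (c : ℂ) : s1c m c = c • (1 : Cl m) := rfl

lemma csmul_smul {m : ℕ} (r : ℝ) (c : ℂ) (a : Cl m) : r • (c • a) = ((r:ℂ) * c) • a := by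
  funext S
  change r • (c * _) = ((r:ℂ) * c) * _
  rw [Complex.real_smul, mul_assoc]

lemma norm_csmul_le {m : ℕ} (c : ℂ) (a : Cl m) : ‖c • a‖ ≤ ‖c‖ * ‖a‖ :=
  norm_smul_le (α := ℂ) (β := Finset (Fin m) → ℂ) c a

lemma csmul_meas {m : ℕ} (g : EE m → ℂ) (h : EE m → Cl m) (hg : AEStronglyMeasurable g)
    (hh : Continuous h) : AEStronglyMeasurable (fun x => g x • h x) := by
  let h' : EE m → (Finset (Fin m) → ℂ) := h
  have hh' : Continuous h' := hh
  have key : AEStronglyMeasurable (fun x => g x • h' x) := hg.smul hh'.aestronglyMeasurable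
  exact key

lemma norm_I_pow_add (m k : ℕ) : ‖Complex.I^m + (-1:ℂ)^k‖ ≤ 2 := by
  refine (norm_add_le _ _).trans ?_
  simp; norm_num
lemma norm_I_pow_sub (m k : ℕ) : ‖Complex.I^m - (-1:ℂ)^k‖ ≤ 2 := by
  refine (norm_sub_le _ _).trans ?_
  simp; norm_num

lemma scalarA {m : ℕ} (hm : 2 ≤ m) (F : EE m → ℝ) (f₀ : ℝ → ℝ) (hF : Continuous F)
    (hrad : ∀ x, F x = f₀ ‖x‖)
    (hFi : ∀ Q : ℕ, Integrable (fun x => |F x| * (1+‖x‖)^Q)) (Y : EE m) (hY : Y ≠ 0) (u : ℂ)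
    (hu : ∀ k : ℕ, ‖u + (-1:ℂ)^k‖ ≤ 2) :
    Integrable (fun x => (F x : ℂ) * AfunR u (((m:ℝ)-2)/2) (ww Y x) (‖x‖*‖Y‖)) ∧
    ∫ x, (F x : ℂ) * AfunR u (((m:ℝ)-2)/2) (ww Y x) (‖x‖*‖Y‖) =
      (((2:ℝ)^(((m:ℝ)-2)/2 - 1) * Real.Gamma (((m:ℝ)-2)/2 + 1) : ℝ) : ℂ) * ((u + 1) *
        ((∫ x, F x * besselJt (((m:ℝ)-2)/2) (‖x‖*‖Y‖) : ℝ) : ℂ)) := by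
  obtain ⟨N, hN⟩ := geg_bound _ (lam_nonneg hm)
  have h := series_scalar hm F f₀ hF hrad hFi Y hY (geg (((m:ℝ)-2)/2)) N
    (fun k w hw => (hN k w hw).trans (by
      have : (0:ℝ) ≤ ((k:ℝ)+1)^N := by positivity
      linarith)) (geg_continuous _) (fun w => by simp [geg]) (fun η hη k hk => mean_geg hm η hη k hk)
      (fun k => u + (-1:ℂ)^k) hu
  have e : ∀ x, (F x : ℂ) * AfunR u (((m:ℝ)-2)/2) (ww Y x) (‖x‖*‖Y‖) =
     (((2:ℝ)^(((m:ℝ)-2)/2 - 1) * Real.Gamma (((m:ℝ)-2)/2 + 1) : ℝ) : ℂ) * ((F x : ℂ) *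
      ∑' k, (u + (-1:ℂ)^k) * ((gk (((m:ℝ)-2)/2) k (‖x‖*‖Y‖) * geg (((m:ℝ)-2)/2) k (ww Y x) : ℝ) : ℂ)) := by
    intro x; simp only [AfunR, gk]; ring
  simp only [e]
  refine ⟨h.1.const_mul _, ?_⟩
  rw [integral_const_mul, h.2]; simp

lemma scalarB {m : ℕ} (hm : 2 ≤ m) (F : EE m → ℝ) (f₀ : ℝ → ℝ) (hF : Continuous F)
    (hrad : ∀ x, F x = f₀ ‖x‖)
    (hFi : ∀ Q : ℕ, Integrable (fun x => |F x| * (1+‖x‖)^Q)) (Y : EE m) (hY : Y ≠ 0) (u : ℂ)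
    (hu : ∀ k : ℕ, ‖u - (-1:ℂ)^k‖ ≤ 2) :
    Integrable (fun x => (F x : ℂ) * BfunR u (((m:ℝ)-2)/2) (ww Y x) (‖x‖*‖Y‖)) ∧
    ∫ x, (F x : ℂ) * BfunR u (((m:ℝ)-2)/2) (ww Y x) (‖x‖*‖Y‖) =
      -(((2:ℝ)^(((m:ℝ)-2)/2 - 1) * Real.Gamma (((m:ℝ)-2)/2 + 1) : ℝ) : ℂ) * ((u - 1) *
        ((∫ x, F x * besselJt (((m:ℝ)-2)/2) (‖x‖*‖Y‖) : ℝ) : ℂ)) := by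
  obtain ⟨N, hN⟩ := gegT_bound _ (lam_nonneg hm)
  have h := series_scalar hm F f₀ hF hrad hFi Y hY (gegT (((m:ℝ)-2)/2)) N
    hN (gegT_continuous _) (fun w => by simp [gegT, geg]) (fun η hη k hk => mean_gegT hm η hη k hk)
      (fun k => u - (-1:ℂ)^k) hu
  have e : ∀ x, (F x : ℂ) * BfunR u (((m:ℝ)-2)/2) (ww Y x) (‖x‖*‖Y‖) =
     -(((2:ℝ)^(((m:ℝ)-2)/2 - 1) * Real.Gamma (((m:ℝ)-2)/2 + 1) : ℝ) : ℂ) * ((F x : ℂ) *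
      ∑' k, (u - (-1:ℂ)^k) * ((gk (((m:ℝ)-2)/2) k (‖x‖*‖Y‖) * gegT (((m:ℝ)-2)/2) k (ww Y x) : ℝ) : ℂ)) := by
    intro x; simp only [BfunR, gk]; ring
  simp only [e]
  refine ⟨h.1.const_mul _, ?_⟩
  rw [integral_const_mul, h.2]; simp

lemma intC {m : ℕ} (hm : 2 ≤ m) (F : EE m → ℝ) (hF : Continuous F)
    (hFi : ∀ Q : ℕ, Integrable (fun x => |F x| * (1+‖x‖)^Q)) (Y : EE m) (u : ℂ)
    (hu : ∀ k : ℕ, ‖u + (-1:ℂ)^k‖ ≤ 2) :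
    Integrable (fun x => (F x : ℂ) * CfunR u (((m:ℝ)-2)/2) (ww Y x) (‖x‖*‖Y‖)) := by
  have h := series_C hm F hF hFi Y (fun k => u + (-1:ℂ)^k) hu
  refine (h.const_mul (-(((2:ℝ)^(((m:ℝ)-2)/2) * Real.Gamma (((m:ℝ)-2)/2 + 1) : ℝ) : ℂ))).congr (.of_forall fun x => ?_)
  simp only [CfunR]; ring

lemma intCw {m : ℕ} (hm : 2 ≤ m) (F : EE m → ℝ) (hF : Continuous F)
    (hFi : ∀ Q : ℕ, Integrable (fun x => |F x| * (1+‖x‖)^Q)) (Y : EE m) (u : ℂ)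
    (hu : ∀ k : ℕ, ‖u + (-1:ℂ)^k‖ ≤ 2) :
    Integrable (fun x => ((F x : ℂ) * CfunR u (((m:ℝ)-2)/2) (ww Y x) (‖x‖*‖Y‖)) • wl Y.ofLp x) := by
  obtain ⟨K, hK, hb⟩ := wl_bound Y.ofLp
  have h0 := intC hm F hF hFi Y u hu
  have h1 := intC hm (fun x => F x * ‖x‖) (by fun_prop) (fun Q => by
    refine (hFi (Q+1)).mono' (by fun_prop) (.of_forall fun x => ?_)
    rw [Real.norm_eq_abs, abs_of_nonneg (by positivity), abs_mul, abs_norm, pow_succ]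
    have : |F x| * (1+‖x‖)^Q * ‖x‖ ≤ |F x| * (1+‖x‖)^Q * (1+‖x‖) := by gcongr; linarith
    linarith) Y u hu
  refine (h1.norm.const_mul K).mono' (csmul_meas _ _ h0.1 (wl_cont _)) (.of_forall fun x => ?_)
  refine (norm_csmul_le _ _).trans ?_
  refine (mul_le_mul_of_nonneg_left (hb x) (norm_nonneg _)).trans (le_of_eq ?_)
  simp only [norm_mul, Complex.norm_real, norm_norm]; ring

lemma intCw_zero {m : ℕ} (F : EE m → ℝ) (f₀ : ℝ → ℝ)
    (hrad : ∀ x, F x = f₀ ‖x‖) (Y : EE m) (u : ℂ) :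
    ∫ x, ((F x : ℂ) * CfunR u (((m:ℝ)-2)/2) (ww Y x) (‖x‖*‖Y‖)) • wl Y.ofLp x = 0 := by
  refine reflect Y _ fun R hRY hR x => ?_
  have h1 : ‖R x‖ = ‖x‖ := R.norm_map x
  have h2 : ww Y (R x) = ww Y x := by
    unfold ww; rw [h1]; nth_rewrite 1 [← hRY]; rw [R.inner_map_map]
  have h3 : wl Y.ofLp (R x) = - wl Y.ofLp x := by
    obtain ⟨c, hc⟩ := Submodule.mem_span_singleton.1 (hR x)
    have : wl Y.ofLp (R x + x) = 0 := by
      rw [← hc, map_smul]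
      have : wl Y.ofLp Y = 0 := wedge_self Y.ofLp
      rw [this, smul_zero]
    rw [map_add] at this
    exact eq_neg_of_add_eq_zero_left this
  simp only [hrad, h1, h2, h3, smul_neg]

lemma main_int {m : ℕ} (hm : 2 ≤ m)
    (f₀ : ℝ → ℝ) (f : SchwartzMap (Fin m → ℝ) ℝ) (hrad : ∀ x, f x = f₀ (nrm x))
    (Y : EE m) (hY : Y ≠ 0) :
    ∫ x : Fin m → ℝ, Kminus m x Y.ofLp * (f x • (1 : Cl m)) =
      ((2:ℝ)^(((m:ℝ)-2)/2) * Real.Gamma (((m:ℝ)-2)/2 + 1) *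
        ∫ x : EE m, f x.ofLp * besselJt (((m:ℝ)-2)/2) (‖x‖*‖Y‖)) • (1 : Cl m) := by
  rw [int_transfer]
  obtain ⟨hF, hFi⟩ := schwartz_int f
  set F : EE m → ℝ := fun x => f x.ofLp with hFd
  have hr : ∀ x, F x = f₀ ‖x‖ := fun x => by rw [hFd]; simp only; rw [hrad, nrm_ofLp]
  obtain ⟨a1, a2⟩ := scalarA hm F f₀ hF hr hFi Y hY (Complex.I^m) (norm_I_pow_add m)
  obtain ⟨b1, b2⟩ := scalarB hm F f₀ hF hr hFi Y hY (Complex.I^m) (norm_I_pow_sub m)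
  have c1 := intCw hm F hF hFi Y (Complex.I^m) (norm_I_pow_add m)
  have c2 := intCw_zero F f₀ hr Y (Complex.I^m)
  have e : ∀ x : EE m, Kminus m x.ofLp Y.ofLp * (f x.ofLp • (1 : Cl m)) =
     s1c m ((F x : ℂ) * AfunR (Complex.I^m) (((m:ℝ)-2)/2) (ww Y x) (‖x‖*‖Y‖) +
      (F x : ℂ) * BfunR (Complex.I^m) (((m:ℝ)-2)/2) (ww Y x) (‖x‖*‖Y‖)) +
      ((F x : ℂ) * CfunR (Complex.I^m) (((m:ℝ)-2)/2) (ww Y x) (‖x‖*‖Y‖)) • wl Y.ofLp x := by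
    intro x
    rw [mul_smul_one, Kminus, nrm_ofLp, nrm_ofLp, ip_ofLp, smul_add, csmul_smul, csmul_smul, s1c_apply, ← mul_add]
    rfl
  have ab : Integrable (fun x => (F x : ℂ) * AfunR (Complex.I^m) (((m:ℝ)-2)/2) (ww Y x) (‖x‖*‖Y‖) +
      (F x : ℂ) * BfunR (Complex.I^m) (((m:ℝ)-2)/2) (ww Y x) (‖x‖*‖Y‖)) := a1.add b1
  simp only [e]
  rw [integral_add ((s1c m).integrable_comp ab) c1, c2, add_zero,
    ContinuousLinearMap.integral_comp_comm _ ab, integral_add a1 b1, a2, b2, s1c_apply]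
  have e2 : (2:ℝ)^(((m:ℝ)-2)/2) = 2 * (2:ℝ)^(((m:ℝ)-2)/2-1) := by
    rw [Real.rpow_sub_one (by norm_num)]; ring
  change _ = _
  rw [← s1_real]
  change s1 m _ = _
  congr 1
  rw [e2]
  push_cast; ring

lemma norm_rs {m : ℕ} {r : ℝ} (hr : 0 < r) (ω : SS m) : ‖r • (ω:EE m)‖ = r := by
  rw [norm_smul, Real.norm_of_nonneg hr.le]; simp

lemma besselJt_even (a t : ℝ) : besselJt a (-t) = besselJt a t := by
  unfold besselJt
  congr 1; funext j
  rw [pow_mul, pow_mul]; congr 3; ring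

lemma besselJ_div (a t : ℝ) (ht : 0 < t) : besselJ a t / t^a = besselJt a t := by
  unfold besselJ besselJt
  rw [← tsum_div_const]
  congr 1; funext j
  have h2 : (t/2)^(2*(j:ℝ)+a) = (t/2)^(2*j) * (t^a / 2^a) := by
    rw [Real.rpow_add (by positivity), ← Real.div_rpow ht.le (by norm_num)]
    congr 1
    rw [← Real.rpow_natCast]; push_cast; rfl
  rw [h2]
  have : t^a ≠ 0 := (Real.rpow_pos_of_pos ht a).ne'
  field_simp

lemma int_F {m : ℕ} (F : EE m → ℝ) (hF : Continuous F)
    (hFi : ∀ Q : ℕ, Integrable (fun x => |F x| * (1+‖x‖)^Q)) : Integrable F := by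
  refine (hFi 0).mono' hF.aestronglyMeasurable (.of_forall fun x => ?_)
  simp

lemma rad_int {m : ℕ} (hm : 2 ≤ m) (F : EE m → ℝ) (f₀ : ℝ → ℝ) (hF : Continuous F)
    (hrad : ∀ x, F x = f₀ ‖x‖)
    (hFi : ∀ Q : ℕ, Integrable (fun x => |F x| * (1+‖x‖)^Q)) (c : ℝ) :
    ∫ x, F x * besselJt (((m:ℝ)-2)/2) (‖x‖*c) =
      (sig m).real Set.univ * ∫ r in Set.Ioi (0:ℝ), r^(m-1) * (f₀ r * besselJt (((m:ℝ)-2)/2) (r*c)) := by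
  obtain ⟨B, hB, hb⟩ := bessel_b0 hm
  have hJ := besselJt_measurable _ (lam_nonneg hm)
  have hJ' : Measurable fun x : EE m => besselJt (((m:ℝ)-2)/2) (‖x‖*c) := hJ.comp (by fun_prop)
  have hi : Integrable fun x : EE m => F x * besselJt (((m:ℝ)-2)/2) (‖x‖*c) :=
    (int_F F hF hFi).mul_bdd (c := B) hJ'.aestronglyMeasurable (.of_forall fun x => hb _)
  rw [polar hm _ hi, ← integral_const_mul]
  refine setIntegral_congr_fun measurableSet_Ioi fun r hr => ?_
  simp only [hrad, norm_rs hr, integral_const, smul_eq_mul]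
  ring

lemma fourier_int {m : ℕ} (hm : 2 ≤ m) (F : EE m → ℝ) (f₀ : ℝ → ℝ) (hF : Continuous F)
    (hrad : ∀ x, F x = f₀ ‖x‖)
    (hFi : ∀ Q : ℕ, Integrable (fun x => |F x| * (1+‖x‖)^Q)) (Y : EE m) (hY : Y ≠ 0) :
    ∫ x, Complex.exp (-Complex.I * (inner ℝ x Y : ℝ)) * (F x : ℂ) =
      (((2:ℝ)^(((m:ℝ)-2)/2) * Real.Gamma (((m:ℝ)-2)/2 + 1) *
       ((sig m).real Set.univ * ∫ r in Set.Ioi (0:ℝ), r^(m-1) * (f₀ r * besselJt (((m:ℝ)-2)/2) (r*‖Y‖))) : ℝ) : ℂ) := by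
  have hi : Integrable fun x : EE m => Complex.exp (-Complex.I * (inner ℝ x Y : ℝ)) * (F x : ℂ) := by
    refine (int_F F hF hFi).ofReal.bdd_mul (c := 1) (by fun_prop) (.of_forall fun x => ?_)
    rw [Complex.norm_exp]; simp
  rw [polar hm _ hi, ← integral_const_mul, ← integral_const_mul, ← integral_complex_ofReal]
  refine setIntegral_congr_fun measurableSet_Ioi fun r hr => ?_
  have hη : ‖(‖Y‖⁻¹ • Y)‖ = 1 := by
    rw [norm_smul, norm_inv, norm_norm, inv_mul_cancel₀ (norm_ne_zero_iff.2 hY)]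
  have h := sphere_bessel hm _ hη 0 (-(r*‖Y‖))
  simp only [hrad, norm_rs hr]
  have e : ∀ ω : SS m, Complex.exp (-Complex.I * (inner ℝ (r • (ω:EE m)) Y : ℝ)) * (f₀ r : ℂ) =
     (Complex.exp (Complex.I * ((-(r*‖Y‖) : ℝ) : ℂ) * (inner ℝ (‖Y‖⁻¹ • Y) (ω : EE m) : ℝ)) *
      (geg (((m:ℝ)-2)/2) 0 (inner ℝ (‖Y‖⁻¹ • Y) (ω : EE m)) : ℝ)) * (f₀ r : ℂ) := by
    intro ω
    have h1 : (inner ℝ (r • (ω:EE m)) Y : ℝ) = (r * ‖Y‖) * inner ℝ (‖Y‖⁻¹ • Y) (ω : EE m) := by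
      rw [real_inner_smul_left, real_inner_smul_left, real_inner_comm]
      have := norm_ne_zero_iff.2 hY
      field_simp
    rw [h1]
    simp only [geg, Complex.ofReal_one, mul_one]
    congr 2
    push_cast; ring
  simp only [e]
  rw [integral_mul_const, h, besselJt_even]
  simp only [cc, Complex.real_smul]
  push_cast
  simp
  ring

lemma const_one {m : ℕ} (hm : 2 ≤ m) :
    (2*Real.pi) ^ (-(m:ℝ)/2) * ((2:ℝ)^(((m:ℝ)-2)/2) * Real.Gamma (((m:ℝ)-2)/2 + 1) * (sig m).real Set.univ) = 1 := by
  rw [sig_real hm]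
  have e : ((m:ℝ)-2)/2 + 1 = (m:ℝ)/2 := by ring
  have e2 : (2:ℝ)^(((m:ℝ)-2)/2) = 2^((m:ℝ)/2) / 2 := by
    rw [← e, Real.rpow_add_one (by norm_num)]; ring
  have e3 : -(m:ℝ)/2 = -((m:ℝ)/2) := by ring
  have hm' : (0:ℝ) < m := by exact_mod_cast (by omega)
  have hG := (Real.Gamma_pos_of_pos (show 0 < (m:ℝ)/2 by positivity)).ne'
  rw [e, e2, e3, Real.rpow_neg (by positivity), Real.mul_rpow (by norm_num) Real.pi_pos.le]
  have h1 : (2:ℝ)^((m:ℝ)/2) ≠ 0 := by positivity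
  have h2 : Real.pi^((m:ℝ)/2) ≠ 0 := by positivity
  field_simp

lemma hankel_eq {m : ℕ} (hm : 2 ≤ m) (f₀ : ℝ → ℝ) (c : ℝ) (hc : 0 < c) :
    ∫ r in Set.Ioi (0:ℝ), f₀ r *
          (besselJ (((m:ℝ) - 2)/2) (r * c) / (r * c) ^ (((m:ℝ) - 2)/2)) *
            r ^ (2 * (((m:ℝ) - 2)/2) + 1) =
    ∫ r in Set.Ioi (0:ℝ), r^(m-1) * (f₀ r * besselJt (((m:ℝ)-2)/2) (r*c)) := by
  refine setIntegral_congr_fun measurableSet_Ioi fun r hr => ?_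
  have hr : 0 < r := hr
  have e : 2 * (((m:ℝ) - 2)/2) + 1 = ((m-1:ℕ):ℝ) := by
    rw [Nat.cast_sub (by omega)]; push_cast; ring
  rw [besselJ_div _ _ (mul_pos hr hc), e, Real.rpow_natCast]
  ring

theorem clifford_fourier_radial (m : ℕ) (hm : 2 ≤ m)
    (f₀ : ℝ → ℝ) (f : SchwartzMap (Fin m → ℝ) ℝ) (hrad : ∀ x, f x = f₀ (nrm x))
    (y : Fin m → ℝ) (hy : y ≠ 0) :
    ((2*Real.pi) ^ (-(m:ℝ)/2)) • (∫ x : Fin m → ℝ, Kminus m x y * (f x • (1 : Cl m)))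
      = (∫ r in Set.Ioi (0:ℝ), f₀ r *
          (besselJ (((m:ℝ) - 2)/2) (r * nrm y) / (r * nrm y) ^ (((m:ℝ) - 2)/2)) *
            r ^ (2 * (((m:ℝ) - 2)/2) + 1)) • (1 : Cl m) ∧
    ((2*Real.pi) ^ (-(m:ℝ)/2)) • (∫ x : Fin m → ℝ, Kminus m x y * (f x • (1 : Cl m)))
      = ((((2*Real.pi : ℝ) ^ (-(m:ℝ)/2) : ℝ) : ℂ) *
          ∫ x : Fin m → ℝ, Complex.exp (-Complex.I * ip x y) * (f x : ℂ)) • (1 : Cl m) := by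
  obtain ⟨Y, rfl⟩ : ∃ Y : EE m, y = Y.ofLp := ⟨WithLp.toLp 2 y, rfl⟩
  have hY : Y ≠ 0 := by rintro rfl; exact hy rfl
  obtain ⟨hF, hFi⟩ := schwartz_int f
  have hr : ∀ x : EE m, f x.ofLp = f₀ ‖x‖ := fun x => by rw [hrad, nrm_ofLp]
  rw [main_int hm f₀ f hrad Y hY, rad_int hm _ f₀ hF hr hFi, nrm_ofLp,
    hankel_eq hm f₀ _ (norm_pos_iff.2 hY), int_transfer, smul_smul]
  simp only [ip_ofLp]
  rw [fourier_int hm _ f₀ hF hr hFi Y hY]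
  constructor
  · congr 1
    rw [← mul_assoc _ ((sig m).real Set.univ), ← mul_assoc, const_one hm, one_mul]
  · rw [← Complex.ofReal_mul]
    exact (s1_real _).symm

end CliffordFourier
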